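/- For every integer α ≥ 1, in the d_5 tower, L_{2α} ≡ 2^{2α−1}·7·t (mod 49) and L_{2α+1} ≡ 2^{2α−2}·35·(p_0 + p_1)·t^3 (mod 49), where congruence of Laurent series means all corresponding coefficients are congruent. In particular the coefficient of t in L_{2α} and the coefficient of (p_0+p_1)t^3 in L_{2α+1} are not divisible by 49. -/

import Mathlib

noncomputable section

/-- `J b = ∏_{k=1}^∞ (1 - q^{b·k})` as a formal power series with integer coefficients. -/
def J (b : ℕ) : PowerSeries ℤ :=
  PowerSeries.mk fun n =>
    PowerSeries.coeff n
      (∏ k ∈ Finset.range (n + 1), (1 - (PowerSeries.X : PowerSeries ℤ) ^ (b * (k + 1))))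

namespace Tower
open PowerSeries Finset

/-- finite q-Pochhammer -/
def qp (b n : ℕ) : PowerSeries ℤ := ∏ k ∈ range n, (1 - (X : PowerSeries ℤ) ^ (b * (k + 1)))

lemma qp_succ (b n : ℕ) : qp b (n + 1) = qp b n * (1 - X ^ (b * (n + 1))) := by
  simp [qp, prod_range_succ]

lemma qp_diff (b : ℕ) (hb : 1 ≤ b) (n m : ℕ) (h : n ≤ m) :
    (X : PowerSeries ℤ) ^ (n + 1) ∣ qp b m - qp b n := by
  induction m, h using Nat.le_induction with
  | base => simp
  | succ m hm ih =>
    have : qp b (m + 1) - qp b n = (qp b m - qp b n) - qp b m * X ^ (b * (m + 1)) := by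
      rw [qp_succ]; ring
    rw [this]
    refine dvd_sub ih (Dvd.dvd.mul_left (pow_dvd_pow _ ?_) _)
    nlinarith

lemma J_diff (b : ℕ) (hb : 1 ≤ b) (n m : ℕ) (h : n ≤ m) :
    (X : PowerSeries ℤ) ^ (n + 1) ∣ J b - qp b m := by
  rw [X_pow_dvd_iff]
  intro d hd
  have h1 : coeff d (J b) = coeff d (qp b (d + 1)) := by simp [J, qp]
  have h2 := (X_pow_dvd_iff.1 (qp_diff b hb d (d + 1) (by omega))) d (by omega)
  have h3 := (X_pow_dvd_iff.1 (qp_diff b hb d m (by omega))) d (by omega)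
  rw [map_sub] at *
  omega

lemma eq_of_X_pow_dvd {R : Type*} [CommRing R] {f g : PowerSeries R}
    (h : ∀ n, (X : PowerSeries R) ^ (n + 1) ∣ f - g) : f = g := by
  ext d
  have := (X_pow_dvd_iff.1 (h d)) d (by omega)
  rw [map_sub, sub_eq_zero] at this
  exact this

lemma expand_qp (b c : ℕ) (hc : c ≠ 0) (n : ℕ) : expand c hc (qp b n) = qp (c * b) n := by
  simp only [qp, map_prod, map_sub, map_one, map_pow, expand_X, ← pow_mul, mul_assoc]

lemma expand_dvd {R : Type*} [CommRing R] (c : ℕ) (hc : c ≠ 0) (n : ℕ) (f : PowerSeries R)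
    (h : (X : PowerSeries R) ^ n ∣ f) :
    (X : PowerSeries R) ^ n ∣ expand c hc f := by
  obtain ⟨g, rfl⟩ := h
  rw [map_mul, map_pow, expand_X, ← pow_mul]
  refine Dvd.dvd.mul_right (pow_dvd_pow _ ?_) _
  have : 1 ≤ c := by omega
  nlinarith

lemma expand_J (b c : ℕ) (hb : 1 ≤ b) (hc : c ≠ 0) : expand c hc (J b) = J (c * b) := by
  apply eq_of_X_pow_dvd
  intro n
  have h1 := expand_dvd c hc (n + 1) _ (J_diff b hb n n le_rfl)
  have hcb : 1 ≤ c * b := Nat.one_le_iff_ne_zero.2 (by positivity)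
  have h2 := J_diff (c * b) hcb n n le_rfl
  rw [map_sub, expand_qp] at h1
  have := dvd_sub h1 h2
  simpa using this

lemma J_const (b : ℕ) (hb : 1 ≤ b) : constantCoeff (J b) = 1 := by
  have : coeff 0 (J b) = 1 := by
    have hb' : b ≠ 0 := by omega
    simp [J, hb']
  simpa using this

lemma J_unit (b : ℕ) (hb : 1 ≤ b) : IsUnit (J b) := by
  rw [PowerSeries.isUnit_iff_constantCoeff, J_const b hb]; exact isUnit_one

/-- Gaussian binomials -/
def gb {R : Type*} [CommRing R] (q : R) : ℕ → ℕ → R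
  | 0, 0 => 1
  | 0, _ + 1 => 0
  | n + 1, 0 => gb q n 0
  | n + 1, k + 1 => q ^ (k + 1) * gb q n (k + 1) + gb q n k

lemma gb_zero {R : Type*} [CommRing R] (q : R) (n : ℕ) : gb q n 0 = 1 := by
  induction n with
  | zero => rfl
  | succ n ih => rw [gb, ih]

lemma gb_lt {R : Type*} [CommRing R] (q : R) (n k : ℕ) (h : n < k) : gb q n k = 0 := by
  induction n generalizing k with
  | zero => cases k with
    | zero => omega
    | succ k => rfl
  | succ n ih => cases k with
    | zero => omega
    | succ k => rw [gb, ih _ (by omega), ih _ (by omega)]; ring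

lemma tri_succ (k : ℕ) : (k + 1) * (k + 1 - 1) / 2 = k * (k - 1) / 2 + k := by
  have := Finset.sum_range_id_mul_two k
  have h2 := Finset.sum_range_id_mul_two (k+1)
  rw [Finset.sum_range_succ] at h2
  omega

theorem qbinom {R : Type*} [CommRing R] (q : R) (n : ℕ) (x y : R) :
    ∏ i ∈ range n, (y + x * q ^ i) =
      ∑ k ∈ range (n + 1), q ^ (k * (k - 1) / 2) * gb q n k * x ^ k * y ^ (n - k) := by
  induction n generalizing x with
  | zero => simp [gb]
  | succ n ih =>
    rw [prod_range_succ']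
    have : ∀ k, y + x * q ^ (k + 1) = y + (x * q) * q ^ k := fun k => by ring
    simp only [this]
    rw [ih, sum_range_succ' _ (n + 1), pow_zero, mul_one, mul_add, sum_mul, sum_mul]
    simp only [gb, mul_add, add_mul, sum_add_distrib]
    have e1 : ∑ k ∈ range (n + 1), q ^ (k * (k - 1) / 2) * gb q n k * (x * q) ^ k * y ^ (n - k) * y
        = ∑ k ∈ range (n + 1), q ^ ((k + 1) * (k + 1 - 1) / 2) * (q ^ (k + 1) * gb q n (k + 1)) * x ^ (k + 1) *
            y ^ (n + 1 - (k + 1)) + q ^ (0 * (0 - 1) / 2) * gb q n 0 * x ^ 0 * y ^ (n + 1 - 0) := by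
      rw [sum_range_succ', sum_range_succ, gb_lt q n (n + 1) (by omega)]
      simp only [mul_zero, zero_mul, add_zero]
      congr 1
      · refine sum_congr rfl fun k hk => ?_
        rw [mem_range] at hk
        have : n + 1 - (k + 1) = (n - (k + 1)) + 1 := by omega
        rw [this, pow_succ y, mul_pow]; ring
      · simp [gb_zero, pow_succ]
    have e2 : ∑ k ∈ range (n + 1), q ^ (k * (k - 1) / 2) * gb q n k * (x * q) ^ k * y ^ (n - k) * x
        = ∑ k ∈ range (n + 1), q ^ ((k + 1) * (k + 1 - 1) / 2) * gb q n k * x ^ (k + 1) *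
            y ^ (n + 1 - (k + 1)) := by
      refine sum_congr rfl fun k _ => ?_
      rw [tri_succ, pow_add, Nat.add_sub_add_right, mul_pow]; ring
    rw [e1, e2, add_right_comm]
    simp only [add_mul, one_mul, zero_mul, Nat.zero_div, pow_zero]

lemma gb_qp (b n k : ℕ) (h : k ≤ n) :
    gb ((X : PowerSeries ℤ) ^ b) n k * qp b k * qp b (n - k) = qp b n := by
  induction n generalizing k with
  | zero => have : k = 0 := by omega
            subst this; simp [gb, qp]
  | succ n ih =>
    cases k with
    | zero => simp [gb_zero, qp]
    | succ k =>
      rw [gb, Nat.add_sub_add_right]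
      have h2 := ih k (by omega)
      rcases Nat.lt_or_ge k n with hk | hk
      · have h1 := ih (k + 1) (by omega)
        have : n - k = (n - (k + 1)) + 1 := by omega
        have h3 := qp_succ b (n - (k + 1))
        rw [this] at h2 ⊢
        rw [h3] at h2 ⊢
        rw [qp_succ b k] at h1 ⊢
        rw [qp_succ b n]
        have e : n - (k + 1) + 1 = n - k := by omega
        have e3 : (X : PowerSeries ℤ) ^ (b * (n - (k + 1) + 1)) * (X ^ b) ^ (k + 1) = X ^ (b * (n + 1)) := by
          rw [← pow_mul, ← pow_add, ← mul_add]; congr 2; omega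
        have e4 : (X : PowerSeries ℤ) ^ (b * (k + 1)) = (X ^ b) ^ (k + 1) := by rw [pow_mul]
        rw [e4] at h1 ⊢
        linear_combination (1 - (X : PowerSeries ℤ) ^ (b * (n - (k + 1) + 1))) * (X ^ b) ^ (k + 1) * h1 + (1 - (X ^ b) ^ (k + 1)) * h2 - qp b n * e3
      · have : k = n := by omega
        subst this
        rw [gb_lt _ k (k + 1) (by omega), Nat.sub_self]
        simp only [Nat.sub_self] at h2
        rw [qp_succ b k]
        linear_combination (1 - (X : PowerSeries ℤ) ^ (b * (k + 1))) * h2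

/-- `gb * J ≡ 1`. -/
lemma gb_J (b : ℕ) (hb : 1 ≤ b) (n k d : ℕ) (h : k ≤ n) (h1 : d ≤ k) (h2 : d ≤ n - k) :
    (X : PowerSeries ℤ) ^ (d + 1) ∣ gb ((X : PowerSeries ℤ) ^ b) n k * J b - 1 := by
  have a1 := J_diff b hb d k h1
  have a2 := J_diff b hb d (n - k) h2
  have a3 := J_diff b hb d n (by omega)
  have e := gb_qp b n k h
  set G := gb ((X : PowerSeries ℤ) ^ b) n k
  have : (X : PowerSeries ℤ) ^ (d + 1) ∣ (G * J b - 1) * J b := by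
    have : (G * J b - 1) * J b = G * J b * (J b - qp b (n - k)) + G * qp b (n - k) * (J b - qp b k)
       - (J b - qp b n) := by linear_combination e
    rw [this]
    exact dvd_sub (dvd_add (Dvd.dvd.mul_left a2 _) (Dvd.dvd.mul_left a1 _)) a3
  exact (J_unit b hb).dvd_mul_right.1 this

end Tower

namespace Tower
open PowerSeries Finset
open scoped PowerSeries.WithPiTopology

/-- sign -/
def sg (m : ℤ) : ℤ := (m.negOnePow : ℤ)

lemma sg_add (a b : ℤ) : sg (a + b) = sg a * sg b := by simp [sg, Int.negOnePow_add]
lemma sg_nat (k : ℕ) : sg k = (-1) ^ k := by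
  simp [sg, Int.negOnePow]
lemma sg_sq (a : ℤ) : sg a * sg a = 1 := by
  rw [← sg_add, sg, Int.negOnePow_even _ ⟨a, rfl⟩]; simp
lemma sg_neg (a : ℤ) : sg (-a) = sg a := by simp [sg]
lemma sg_one : sg 1 = -1 := by simp [sg]
lemma sg_two_mul (a : ℤ) : sg (2 * a) = 1 := by rw [two_mul, sg_add, sg_sq]
lemma sg_sub_nat (k n : ℕ) : sg ((k : ℤ) - n) = (-1) ^ k * (-1) ^ n := by
  rw [sub_eq_add_neg, sg_add, sg_neg, sg_nat, sg_nat]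

lemma theta_limit (b : ℕ) (hb : 1 ≤ b) (c : ℤ → ℤ) (e : ℤ → ℕ) (he : ∀ m, |m| ≤ e m + 1)
    (N : ℕ → ℕ) (hN : ∀ n, 2 * n ≤ N n) (F : PowerSeries ℤ) (Fn : ℕ → PowerSeries ℤ)
    (hF : ∀ n, (X : PowerSeries ℤ) ^ (n + 1) ∣ F - Fn n)
    (h : ∀ n, Fn n = ∑ k ∈ range (N n + 1), C (c ((k : ℤ) - n)) * X ^ (e ((k : ℤ) - n)) *
      gb ((X : PowerSeries ℤ) ^ b) (N n) k) :
    HasSum (fun m : ℤ => C (c m) * (X : PowerSeries ℤ) ^ (e m)) (F * J b) := by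
  rw [PowerSeries.WithPiTopology.hasSum_iff_hasSum_coeff]
  intro d
  set n := 2 * d + 3 with hn
  let em : ℕ ↪ ℤ := ⟨fun k => (k : ℤ) - n, fun a b h => by simpa using h⟩
  have key : coeff d (F * J b) = ∑ m ∈ (range (N n + 1)).map em,
      coeff d (C (c m) * (X : PowerSeries ℤ) ^ (e m)) := by
    rw [sum_map, ← map_sum, ← sub_eq_zero, ← map_sub]
    refine X_pow_dvd_iff.1 ?_ d (Nat.lt_succ_self d)
    have h1 : (X : PowerSeries ℤ) ^ (d + 1) ∣ (F - Fn n) * J b :=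
      Dvd.dvd.mul_right ((pow_dvd_pow _ (by omega)).trans (hF n)) _
    have h2 : (X : PowerSeries ℤ) ^ (d + 1) ∣ Fn n * J b -
        ∑ k ∈ range (N n + 1), C (c (em k)) * (X : PowerSeries ℤ) ^ (e (em k)) := by
      rw [h n, sum_mul, ← sum_sub_distrib]
      refine dvd_sum fun k hk => ?_
      rw [mem_range] at hk
      have hNn := hN n
      have e1 : em k = (k : ℤ) - n := rfl
      rw [e1]
      have : C (c ((k : ℤ) - n)) * X ^ (e ((k : ℤ) - n)) * gb ((X : PowerSeries ℤ) ^ b) (N n) k * J b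
        - C (c ((k : ℤ) - n)) * X ^ (e ((k : ℤ) - n)) =
        C (c ((k : ℤ) - n)) * X ^ (e ((k : ℤ) - n)) * (gb ((X : PowerSeries ℤ) ^ b) (N n) k * J b - 1) := by ring
      rw [this]
      have h3 := he ((k : ℤ) - n)
      by_cases hd : d + 1 ≤ e ((k : ℤ) - n)
      · exact Dvd.dvd.mul_right (Dvd.dvd.mul_left (pow_dvd_pow _ hd) _) _
      · refine Dvd.dvd.mul_left (gb_J b hb (N n) k d (by omega) ?_ ?_) _
        · rw [abs_le] at h3; omega
        · rw [abs_le] at h3; omega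
    have := dvd_add h1 h2
    convert this using 1
    ring
  rw [key]
  refine hasSum_sum_of_ne_finset_zero ?_
  intro m hm
  rw [coeff_C_mul, coeff_X_pow, if_neg, mul_zero]
  intro hd
  apply hm
  have h3 := he m
  have hNn := hN n
  rw [abs_le] at h3
  rw [mem_map]
  refine ⟨(m + n).toNat, ?_, ?_⟩
  · rw [mem_range]; omega
  · change (((m + n).toNat : ℤ)) - n = m
    omega

/-- odd product -/
def op (n : ℕ) : PowerSeries ℤ := ∏ k ∈ range n, (1 - (X : PowerSeries ℤ) ^ (2 * k + 1))

lemma qp_op (n : ℕ) : qp 1 (2 * n) = qp 2 n * op n := by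
  induction n with
  | zero => simp [qp, op]
  | succ n ih =>
    rw [mul_add, mul_one, show 2 * n + 2 = (2 * n + 1) + 1 from rfl, qp_succ, qp_succ, ih, qp_succ]
    simp only [op, prod_range_succ]
    ring

lemma prod_X_odd (n : ℕ) : ∏ i ∈ range n, (X : PowerSeries ℤ) ^ (2 * i + 1) = X ^ (n ^ 2) := by
  induction n with
  | zero => simp
  | succ n ih => rw [prod_range_succ, ih, ← pow_add]; congr 1; ring

lemma two_tri (k : ℕ) : 2 * (k * (k - 1) / 2) = k * (k - 1) := by
  rw [mul_comm, Nat.div_mul_cancel]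
  have := Finset.sum_range_id_mul_two k
  exact ⟨_, by rw [← this]; ring⟩

lemma phi_fin (n : ℕ) : (op n) ^ 2 = ∑ k ∈ range (2 * n + 1), C (sg ((k : ℤ) - n)) *
    X ^ ((((k : ℤ) - n) ^ 2).toNat) * gb ((X : PowerSeries ℤ) ^ 2) (2 * n) k := by
  have h := qbinom ((X : PowerSeries ℤ) ^ 2) (2 * n) (-X) (X ^ (2 * n))
  have hl : ∏ i ∈ range (2 * n), ((X : PowerSeries ℤ) ^ (2 * n) + -X * (X ^ 2) ^ i) =
      (X ^ (3 * n ^ 2) * (-1) ^ n) * (op n) ^ 2 := by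
    rw [two_mul, prod_range_add]
    have a1 : ∏ i ∈ range n, ((X : PowerSeries ℤ) ^ (n + n) + -X * (X ^ 2) ^ i) =
        X ^ (n ^ 2) * (-1) ^ n * op n := by
      have hop : op n = ∏ i ∈ range n, (1 - (X : PowerSeries ℤ) ^ (2 * (n - 1 - i) + 1)) :=
        (prod_range_reflect (fun k => (1 - (X : PowerSeries ℤ) ^ (2 * k + 1))) n).symm
      have hm : (-1 : PowerSeries ℤ) ^ n = ∏ i ∈ range n, (-1 : PowerSeries ℤ) := by simp
      rw [hop, hm, ← prod_X_odd, ← prod_mul_distrib, ← prod_mul_distrib]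
      refine prod_congr rfl fun i hi => ?_
      rw [mem_range] at hi
      have : (X : PowerSeries ℤ) ^ (n + n) = X ^ (2 * i + 1) * X ^ (2 * (n - 1 - i) + 1) := by
        rw [← pow_add]; congr 1; omega
      rw [this]; ring
    have a2 : ∏ i ∈ range n, ((X : PowerSeries ℤ) ^ (n + n) + -X * (X ^ 2) ^ (n + i)) =
        X ^ (2 * n ^ 2) * op n := by
      have : (X : PowerSeries ℤ) ^ (2 * n ^ 2) = ∏ i ∈ range n, X ^ (2 * n) := by
        rw [prod_const, card_range, ← pow_mul]; congr 1; ring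
      rw [op, this, ← prod_mul_distrib]
      refine prod_congr rfl fun i _ => ?_
      ring
    rw [a1, a2]; ring
  rw [hl] at h
  have hne : ((X : PowerSeries ℤ) ^ (3 * n ^ 2) * (-1) ^ n) ≠ 0 :=
    mul_ne_zero (pow_ne_zero _ X_ne_zero) (pow_ne_zero _ (by simp))
  apply mul_left_cancel₀ hne
  rw [h, mul_sum]
  refine sum_congr rfl fun k hk => ?_
  rw [mem_range] at hk
  have hx : ((X : PowerSeries ℤ) ^ 2) ^ (k * (k - 1) / 2) * X ^ k * (X ^ (2 * n)) ^ (2 * n - k) =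
      X ^ (3 * n ^ 2) * X ^ ((((k : ℤ) - n) ^ 2).toNat) := by
    rw [← pow_mul, ← pow_mul, ← pow_add, ← pow_add, ← pow_add, two_tri]
    congr 1
    obtain ⟨l, hl2⟩ : ∃ l, 2 * n = k + l := ⟨2 * n - k, by omega⟩
    rw [hl2, Nat.add_sub_cancel_left, ← hl2]
    have hl3 : (l : ℤ) = 2 * n - k := by omega
    have hk2 : (((k * (k - 1) : ℕ)) : ℤ) = k * (k - 1) := by
      cases k with
      | zero => simp
      | succ k => rw [Nat.add_sub_cancel]; push_cast; ring
    have : ((((k : ℤ) - n) ^ 2).toNat : ℤ) = ((k : ℤ) - n) ^ 2 := Int.toNat_of_nonneg (sq_nonneg _)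
    have h4 : ((k * (k - 1) + k + 2 * n * l : ℕ) : ℤ) = ((3 * n ^ 2 + (((k : ℤ) - n) ^ 2).toNat : ℕ) : ℤ) := by
      rw [Nat.cast_add, Nat.cast_add, hk2, Nat.cast_add, this, Nat.cast_mul, hl3]; push_cast; ring
    exact_mod_cast h4
  have hs : ((-1 : PowerSeries ℤ)) ^ k = (-1) ^ n * C (sg ((k : ℤ) - n)) := by
    rw [sg_sub_nat]; simp only [map_mul, map_pow, map_neg, map_one]
    rw [mul_comm ((-1 : PowerSeries ℤ) ^ k), ← mul_assoc, ← pow_add, ← two_mul, pow_mul]; simp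
  rw [neg_pow, hs]
  linear_combination (-1) ^ n * C (sg ((k : ℤ) - n)) * gb ((X : PowerSeries ℤ) ^ 2) (2 * n) k * hx

theorem phi_exists : ∃ φ : PowerSeries ℤ, φ * J 2 = J 1 ^ 2 ∧
    HasSum (fun m : ℤ => C (sg m) * (X : PowerSeries ℤ) ^ ((m ^ 2).toNat)) φ := by
  obtain ⟨K, hK⟩ := (J_unit 2 (by norm_num)).exists_right_inv
  set O := J 1 * K
  have hO : O * J 2 = J 1 := by simp only [O]; linear_combination J 1 * hK
  refine ⟨O ^ 2 * J 2, by rw [← hO]; ring, ?_⟩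
  refine theta_limit 2 (by norm_num) sg _ ?_ (fun n => 2 * n) (fun n => le_rfl) (O ^ 2) (fun n => (op n) ^ 2) ?_ phi_fin
  · intro m
    rw [Int.toNat_of_nonneg (sq_nonneg _), abs_le]
    constructor <;> nlinarith [sq_nonneg (m+1), sq_nonneg (m-1), sq_nonneg m]
  · intro n
    have h1 := J_diff 1 le_rfl n (2 * n) (by omega)
    have h2 := J_diff 2 (by norm_num) n n le_rfl
    have : (X : PowerSeries ℤ) ^ (n + 1) ∣ J 2 * (O - op n) := by
      have e : J 2 * (O - op n) = (J 1 - qp 1 (2 * n)) - (J 2 - qp 2 n) * op n := by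
        rw [qp_op]; linear_combination hO
      rw [e]; exact dvd_sub h1 (Dvd.dvd.mul_right h2 _)
    have := (J_unit 2 (by norm_num)).dvd_mul_left.1 this
    rw [sq_sub_sq]
    exact Dvd.dvd.mul_left this _

lemma prod_X_id (n : ℕ) : ∏ i ∈ range n, (X : PowerSeries ℤ) ^ i = X ^ (n * (n - 1) / 2) := by
  rw [prod_pow_eq_pow_sum, sum_range_id]

lemma tri_int_nonneg (m : ℤ) : 0 ≤ m * (m - 1) / 2 := by
  apply Int.ediv_nonneg _ (by norm_num)
  rcases le_or_gt m 0 with h | h <;> nlinarith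

lemma two_tri_int (m : ℤ) : 2 * (((m * (m - 1) / 2).toNat : ℕ) : ℤ) = m * (m - 1) := by
  rw [Int.toNat_of_nonneg (tri_int_nonneg m)]
  have : (2 : ℤ) ∣ m * (m - 1) := by
    have := Int.even_mul_pred_self m
    exact this.two_dvd
  omega

lemma map_gb {R S : Type*} [CommRing R] [CommRing S] (f : R →+* S) (q : R) (n k : ℕ) :
    f (gb q n k) = gb (f q) n k := by
  induction n generalizing k with
  | zero => cases k <;> simp [gb]
  | succ n ih => cases k with
    | zero => simp [gb, ih]
    | succ k => simp [gb, ih]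

lemma jac_raw (n : ℕ) :
    (∑ k ∈ range ((2 * n + 1) + 1), (X : PowerSeries ℤ) ^ (k * (k - 1) / 2) * gb X (2 * n + 1) k *
      (-1) ^ k * (X ^ n) ^ (2 * n + 1 - k) = 0) ∧
    (∑ k ∈ range ((2 * n + 1) + 1), (X : PowerSeries ℤ) ^ (k * (k - 1) / 2) * gb X (2 * n + 1) k *
      ((-1) ^ k * (k : PowerSeries ℤ)) * (X ^ n) ^ (2 * n + 1 - k) = - X ^ n *
      (∏ i ∈ range n, ((X : PowerSeries ℤ) ^ n - X ^ i)) * ∏ i ∈ range n, (X ^ n - X ^ (n + 1 + i))) := by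
  have h := qbinom (Polynomial.C (X : PowerSeries ℤ)) (2 * n + 1) (-Polynomial.X) (Polynomial.C (X ^ n))
  rw [show 2 * n + 1 = (n + 1) + n by ring, prod_range_add, prod_range_succ] at h
  rw [show 2 * n + 1 = (n + 1) + n by ring]
  constructor
  · have h1 := congrArg (Polynomial.eval 1) h
    simp only [Polynomial.eval_mul, Polynomial.eval_prod, Polynomial.eval_add, Polynomial.eval_neg,
      Polynomial.eval_X, Polynomial.eval_C, Polynomial.eval_pow, Polynomial.eval_finsetSum, ← map_gb] at h1
    rw [← h1]; ring
  · have h1 := congrArg (fun p => Polynomial.eval 1 (Polynomial.derivative p)) h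
    simp only [Polynomial.derivative_sum, Polynomial.eval_finsetSum, Polynomial.derivative_mul, ← map_gb,
      Polynomial.derivative_C, ← map_pow, Polynomial.derivative_add, Polynomial.derivative_neg, Polynomial.derivative_X] at h1
    simp only [Polynomial.eval_mul, Polynomial.eval_prod, Polynomial.eval_add, Polynomial.eval_neg,
      Polynomial.eval_X, Polynomial.eval_C, Polynomial.eval_pow, Polynomial.eval_zero, Polynomial.eval_one] at h1
    have hd : ∀ k : ℕ, Polynomial.eval 1 (Polynomial.derivative ((-Polynomial.X : Polynomial (PowerSeries ℤ)) ^ k)) = (-1) ^ k * k := by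
      intro k
      rw [neg_pow (Polynomial.X : Polynomial (PowerSeries ℤ)), show (-1 : Polynomial (PowerSeries ℤ)) = Polynomial.C (-1) by simp, ← map_pow,
        Polynomial.derivative_C_mul, Polynomial.derivative_X_pow]
      simp
    simp only [hd] at h1
    have e : ∀ m : ℕ, (X : PowerSeries ℤ) ^ n + -1 * X ^ m = X ^ n - X ^ m := fun m => by ring
    simp only [e] at h1
    simp only [zero_mul, mul_zero, zero_add, add_zero] at h1
    rw [← h1]; ring

lemma jac_fin (n : ℕ) : 2 * (qp 1 n) ^ 2 = ∑ k ∈ range ((2 * n + 1) + 1),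
    C (-(sg ((k : ℤ) - n) * (2 * ((k : ℤ) - n) - 1))) *
    X ^ ((((k : ℤ) - n) * ((k : ℤ) - n - 1) / 2).toNat) * gb ((X : PowerSeries ℤ) ^ 1) (2 * n + 1) k := by
  obtain ⟨h1, h2⟩ := jac_raw n
  have a1 : ∏ i ∈ range n, ((X : PowerSeries ℤ) ^ n - X ^ i) = X ^ (n * (n - 1) / 2) * (-1) ^ n * qp 1 n := by
    have hop : qp 1 n = ∏ i ∈ range n, (1 - (X : PowerSeries ℤ) ^ (1 * ((n - 1 - i) + 1))) :=
      (prod_range_reflect (fun k => (1 - (X : PowerSeries ℤ) ^ (1 * (k + 1)))) n).symm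
    have hm : (-1 : PowerSeries ℤ) ^ n = ∏ i ∈ range n, (-1 : PowerSeries ℤ) := by simp
    rw [hop, hm, ← prod_X_id, ← prod_mul_distrib, ← prod_mul_distrib]
    refine prod_congr rfl fun i hi => ?_
    rw [mem_range] at hi
    have : (X : PowerSeries ℤ) ^ n = X ^ i * X ^ (1 * (n - 1 - i + 1)) := by
      rw [← pow_add]; congr 1; omega
    rw [this]; ring
  have a2 : ∏ i ∈ range n, ((X : PowerSeries ℤ) ^ n - X ^ (n + 1 + i)) = X ^ (n ^ 2) * qp 1 n := by
    have : (X : PowerSeries ℤ) ^ (n ^ 2) = ∏ i ∈ range n, X ^ n := by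
      rw [prod_const, card_range, ← pow_mul]; congr 1; ring
    rw [qp, this, ← prod_mul_distrib]
    refine prod_congr rfl fun i _ => ?_
    ring
  rw [a1, a2] at h2
  have hne : ((X : PowerSeries ℤ) ^ (n + n * (n - 1) / 2 + n ^ 2) * (-1) ^ n) ≠ 0 :=
    mul_ne_zero (pow_ne_zero _ X_ne_zero) (pow_ne_zero _ (by simp))
  apply mul_left_cancel₀ hne
  have hL : ((X : PowerSeries ℤ) ^ (n + n * (n - 1) / 2 + n ^ 2) * (-1) ^ n) * (2 * (qp 1 n) ^ 2) =
      (2 * n + 1) * ∑ k ∈ range ((2 * n + 1) + 1), (X : PowerSeries ℤ) ^ (k * (k - 1) / 2) * gb X (2 * n + 1) k *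
      (-1) ^ k * (X ^ n) ^ (2 * n + 1 - k) - 2 * ∑ k ∈ range ((2 * n + 1) + 1), (X : PowerSeries ℤ) ^ (k * (k - 1) / 2) * gb X (2 * n + 1) k *
      ((-1) ^ k * (k : PowerSeries ℤ)) * (X ^ n) ^ (2 * n + 1 - k) := by
    rw [h1, h2]; ring
  rw [hL, mul_sum, mul_sum, mul_sum, ← sum_sub_distrib]
  refine sum_congr rfl fun k hk => ?_
  rw [mem_range] at hk
  have hx : (X : PowerSeries ℤ) ^ (k * (k - 1) / 2) * (X ^ n) ^ (2 * n + 1 - k) =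
      X ^ (n + n * (n - 1) / 2 + n ^ 2) * X ^ ((((k : ℤ) - n) * ((k : ℤ) - n - 1) / 2).toNat) := by
    rw [← pow_mul, ← pow_add, ← pow_add]
    congr 1
    obtain ⟨l, hl2⟩ : ∃ l, 2 * n + 1 = k + l := ⟨2 * n + 1 - k, by omega⟩
    rw [hl2, Nat.add_sub_cancel_left]
    have hl3 : (l : ℤ) = 2 * n + 1 - k := by omega
    have hk2 : ∀ k : ℕ, (((k * (k - 1) : ℕ)) : ℤ) = k * (k - 1) := by
      intro k
      cases k with
      | zero => simp
      | succ k => rw [Nat.add_sub_cancel]; push_cast; ring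
    have h3 := two_tri_int ((k : ℤ) - n)
    have h5 : ((2 * (k * (k - 1) / 2) : ℕ) : ℤ) = k * (k - 1) := by rw [two_tri, hk2]
    have h6 : ((2 * (n * (n - 1) / 2) : ℕ) : ℤ) = n * (n - 1) := by rw [two_tri, hk2]
    rw [Nat.cast_mul] at h5 h6
    set a := k * (k - 1) / 2
    set b := n * (n - 1) / 2
    set c := (((k : ℤ) - n) * ((k : ℤ) - n - 1) / 2).toNat
    have h7 : (((a + n * l : ℕ)) : ℤ) = ((n + b + n ^ 2 + c : ℕ) : ℤ) := by
      push_cast at *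
      apply mul_left_cancel₀ (two_ne_zero (α := ℤ))
      rw [hl3]
      linear_combination h5 - h6 - h3
    exact_mod_cast h7
  have hs : ((-1 : PowerSeries ℤ)) ^ k = (-1) ^ n * C (sg ((k : ℤ) - n)) := by
    rw [sg_sub_nat]; simp only [map_mul, map_pow, map_neg, map_one]
    rw [mul_comm ((-1 : PowerSeries ℤ) ^ k), ← mul_assoc, ← pow_add, ← two_mul, pow_mul]; simp
  rw [hs, pow_one]
  have hc : C (-(sg ((k : ℤ) - n) * (2 * ((k : ℤ) - n) - 1))) = -(C (sg ((k : ℤ) - n)) * (2 * ((k : PowerSeries ℤ) - n) - 1)) := by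
    simp
  rw [hc]
  linear_combination ((2 * n + 1) - 2 * (k : PowerSeries ℤ)) * (-1) ^ n * C (sg ((k : ℤ) - n)) * gb X (2 * n + 1) k * hx

theorem jacobi : HasSum (fun m : ℤ => C (-(sg m * (2 * m - 1))) *
    (X : PowerSeries ℤ) ^ ((m * (m - 1) / 2).toNat)) (2 * J 1 ^ 3) := by
  have h := theta_limit 1 le_rfl (fun m => -(sg m * (2 * m - 1))) (fun m => (m * (m - 1) / 2).toNat) ?_
    (fun n => 2 * n + 1) (fun n => by omega) (2 * J 1 ^ 2) (fun n => 2 * qp 1 n ^ 2) ?_ jac_fin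
  · convert h using 1; ring
  · intro m
    have h3 := two_tri_int m
    rw [abs_le]
    constructor <;> nlinarith [sq_nonneg (m+1), sq_nonneg (m-1), sq_nonneg m, sq_nonneg (m-2)]
  · intro n
    have h2 := J_diff 1 le_rfl n n le_rfl
    rw [← mul_sub, sq_sub_sq]
    exact Dvd.dvd.mul_left (Dvd.dvd.mul_left h2 _) _
end Tower

namespace Tower
open PowerSeries Finset
open scoped PowerSeries.WithPiTopology

/-- monomial term -/
def M (c : ℤ) (e : ℕ) : PowerSeries ℤ := C c * X ^ e

lemma coeff_M (c : ℤ) (e d : ℕ) : coeff d (M c e) = if d = e then c else 0 := by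
  rw [M, coeff_C_mul, coeff_X_pow]; simp

lemma M_mul (c c' : ℤ) (e e' : ℕ) : M c e * M c' e' = M (c * c') (e + e') := by
  simp only [M, map_mul, pow_add]; ring
lemma M_add (c c' : ℤ) (e : ℕ) : M c e + M c' e = M (c + c') e := by
  simp only [M, map_add]; ring
lemma M_neg (c : ℤ) (e : ℕ) : - M c e = M (-c) e := by
  simp only [M, map_neg]; ring
lemma M_zero (e : ℕ) : M 0 e = 0 := by simp [M]

lemma M_summable {ι : Type*} (c : ι → ℤ) (E : ι → ℕ) (hE : ∀ d, {i | E i = d}.Finite) :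
    Summable (fun i => M (c i) (E i)) := by
  have h : ∀ d, Summable (fun i => coeff d (M (c i) (E i))) := by
    intro d
    apply summable_of_hasFiniteSupport
    refine (hE d).subset ?_
    intro i hi
    by_contra h
    apply hi
    change coeff d (M (c i) (E i)) = 0
    rw [coeff_M, if_neg]
    intro h2; exact h h2.symm
  refine ⟨PowerSeries.mk fun d => ∑' i, coeff d (M (c i) (E i)), ?_⟩
  rw [PowerSeries.WithPiTopology.hasSum_iff_hasSum_coeff]
  intro d
  rw [coeff_mk]
  exact (h d).hasSum

lemma M_expand {ι : Type*} (c : ι → ℤ) (E : ι → ℕ) (f : PowerSeries ℤ) (k : ℕ) (hk : k ≠ 0)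
    (h : HasSum (fun i => M (c i) (E i)) f) :
    HasSum (fun i => M (c i) (k * E i)) (expand k hk f) := by
  rw [PowerSeries.WithPiTopology.hasSum_iff_hasSum_coeff] at h ⊢
  intro d
  rw [coeff_expand]
  by_cases hd : k ∣ d
  · obtain ⟨e, rfl⟩ := hd
    rw [if_pos (dvd_mul_right k e), Nat.mul_div_cancel_left _ (Nat.pos_of_ne_zero hk)]
    convert h e using 2 with i
    rw [coeff_M, coeff_M]
    have : (k * e = k * E i) ↔ e = E i := by
      constructor
      · intro h; exact Nat.eq_of_mul_eq_mul_left (Nat.pos_of_ne_zero hk) h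
      · rintro rfl; rfl
    simp only [this]
  · rw [if_neg hd]
    convert hasSum_zero using 2 with i
    rw [coeff_M, if_neg]
    rintro rfl; exact hd (dvd_mul_right _ _)

lemma J_pent : J 1 = pentagonalSeries ℤ := by
  ext d
  obtain ⟨s, hs⟩ := (Filter.eventually_atTop.1 (coeff_prod_one_sub_X_pow_eventually_eq ℤ d))
  obtain ⟨N, hN⟩ := s.exists_nat_subset_range
  have h1 := hs (range (N + d)) (hN.trans (range_mono (by omega)))
  rw [← h1]
  have h2 := J_diff 1 le_rfl d (N + d) (by omega)
  have := X_pow_dvd_iff.1 h2 d (by omega)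
  rw [map_sub, sub_eq_zero] at this
  rw [this]; simp [qp]

lemma J1_sum : HasSum (fun j : ℤ => M (sg j) (pentagonal j)) (J 1) := by
  rw [J_pent]
  convert PowerSeries.WithPiTopology.hasSum_pentagonalSeries ℤ using 2 with j
  simp [M, sg]

/-- triangular exponent -/
def tri (m : ℤ) : ℕ := (m * (m - 1) / 2).toNat
lemma tri_spec (m : ℤ) : 2 * (tri m : ℤ) = m * (m - 1) := two_tri_int m
/-- square exponent -/
def sqn (m : ℤ) : ℕ := (m ^ 2).toNat
lemma sqn_spec (m : ℤ) : (sqn m : ℤ) = m ^ 2 := Int.toNat_of_nonneg (sq_nonneg _)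

lemma fin_aux {ι : Type*} (f : ι → ℤ) (hf : Function.Injective f) (E : ι → ℕ) (d : ℕ)
    (h : ∀ i, E i ≤ d → |f i| ≤ d + 1) : {i | E i ≤ d}.Finite := by
  refine Set.Finite.of_finite_image ((Set.finite_Icc (-((d : ℤ) + 1)) (d + 1)).subset ?_) hf.injOn
  rintro _ ⟨i, hi, rfl⟩
  have := h i hi
  rw [abs_le] at this
  exact this

lemma tri_fin (d : ℕ) : {i | tri i ≤ d}.Finite := by
  refine fin_aux id Function.injective_id _ _ fun m hm => ?_
  have := tri_spec m
  rw [id, abs_le]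
  zify at hm
  constructor <;> nlinarith [sq_nonneg (m+1), sq_nonneg (m-1), sq_nonneg m, sq_nonneg (m-2)]
lemma sqn_fin (d : ℕ) : {i | sqn i ≤ d}.Finite := by
  refine fin_aux id Function.injective_id _ _ fun m hm => ?_
  have := sqn_spec m
  rw [id, abs_le]
  zify at hm
  constructor <;> nlinarith [sq_nonneg (m+1), sq_nonneg (m-1), sq_nonneg m, sq_nonneg (m-2)]
lemma pent_fin (d : ℕ) : {i | pentagonal i ≤ d}.Finite := by
  refine fin_aux id Function.injective_id _ _ fun m hm => ?_
  have := two_mul_natCast_pentagonal m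
  rw [id, abs_le]
  zify at hm
  constructor <;> nlinarith [sq_nonneg (m+1), sq_nonneg (m-1), sq_nonneg m, sq_nonneg (m-2)]
lemma fin_eq {ι : Type*} {E : ι → ℕ} (h : ∀ d, {i | E i ≤ d}.Finite) (d : ℕ) : {i | E i = d}.Finite :=
  (h d).subset fun _ hi => le_of_eq hi
lemma fin_add {ι κ : Type*} {E : ι → ℕ} {F : κ → ℕ} (h : ∀ d, {i | E i ≤ d}.Finite)
    (h' : ∀ d, {i | F i ≤ d}.Finite) (d : ℕ) : {p : ι × κ | E p.1 + F p.2 ≤ d}.Finite := by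
  refine ((h d).prod (h' d)).subset ?_
  rintro ⟨i, j⟩ hij
  simp only [Set.mem_ofPred_eq, Set.mem_prod] at hij ⊢
  omega

lemma two_ne : (2 : PowerSeries ℤ) ≠ 0 := by
  intro h
  have := congrArg (constantCoeff (R := ℤ)) h
  rw [map_ofNat, map_zero] at this
  norm_num at this

lemma eq_zero_of_neg {a : PowerSeries ℤ} (h : a = -a) : a = 0 := by
  have : (2 : PowerSeries ℤ) * a = 0 := by linear_combination h
  rcases mul_eq_zero.1 this with h | h
  · exact absurd h two_ne
  · exact h

lemma M_mulsum {ι κ : Type*} {c : ι → ℤ} {E : ι → ℕ} {c' : κ → ℤ} {F : κ → ℕ} {f g : PowerSeries ℤ}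
    (h : ∀ d, {i | E i ≤ d}.Finite) (h' : ∀ d, {i | F i ≤ d}.Finite)
    (hf : HasSum (fun i => M (c i) (E i)) f) (hg : HasSum (fun i => M (c' i) (F i)) g) :
    HasSum (fun p : ι × κ => M (c p.1 * c' p.2) (E p.1 + F p.2)) (f * g) := by
  have := hf.mul hg (by
    simp only [M_mul]
    exact M_summable _ _ (fin_eq (fin_add h h')))
  simpa only [M_mul] using this

lemma tri_zero : HasSum (fun m : ℤ => M (sg m) (tri m)) 0 := by
  obtain ⟨s, hs⟩ := M_summable sg tri (fin_eq tri_fin)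
  have h2 := (Equiv.hasSum_iff (Equiv.subLeft (1 : ℤ))).2 hs
  have : (fun m : ℤ => M (sg m) (tri m)) ∘ (Equiv.subLeft (1 : ℤ)) = fun m => - M (sg m) (tri m) := by
    funext m
    have e1 : tri (1 - m) = tri m := by
      have a := tri_spec m
      have b := tri_spec (1 - m)
      zify
      linarith
    have e2 : sg (1 - m) = - sg m := by
      rw [sub_eq_add_neg, sg_add, sg_neg, sg_one]; ring
    simp [e1, e2, M_neg]
  rw [this] at h2
  have := h2.unique hs.neg
  rw [eq_zero_of_neg this] at hs
  exact hs

theorem quintuple : ∃ g : PowerSeries ℤ, g * J 2 ^ 2 = J 1 ^ 5 ∧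
    HasSum (fun n : ℤ => M (1 - 6 * n) (pentagonal n)) g := by
  obtain ⟨φ, hφ, hφs⟩ := phi_exists
  have hφs : HasSum (fun m : ℤ => M (sg m) (sqn m)) φ := hφs
  have hJ : HasSum (fun m : ℤ => M (-(sg m * (2 * m - 1))) (tri m)) (2 * J 1 ^ 3) := jacobi
  obtain ⟨g, hg⟩ := M_summable (fun n : ℤ => 1 - 6 * n) pentagonal (fin_eq pent_fin)
  refine ⟨g, ?_, hg⟩
  have hJ2 : HasSum (fun j : ℤ => M (sg j) (2 * pentagonal j)) (J 2) := by
    have := M_expand _ _ _ 2 two_ne_zero J1_sum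
    rwa [expand_J 1 2 le_rfl] at this
  have s1 := M_mulsum tri_fin sqn_fin hJ hφs
  obtain ⟨w, hw⟩ := M_summable (fun j => j * sg j) sqn (fin_eq sqn_fin)
  have s0 := M_mulsum tri_fin sqn_fin tri_zero hw
  rw [zero_mul] at s0
  have s2 := s1.add (s0.mul_left (M (-4) 0))
  simp only [M_mul, zero_add, M_add, mul_zero, add_zero] at s2
  -- reparametrize
  let e1 : ℤ × ℤ ≃ ℤ × ℤ :=
    { toFun := fun p => (p.1 + 1 - 2 * p.2, p.2)
      invFun := fun p => (p.1 - 1 + 2 * p.2, p.2)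
      left_inv := fun p => by ext <;> simp <;> ring
      right_inv := fun p => by ext <;> simp <;> ring }
  have s3 := (Equiv.hasSum_iff e1).2 s2
  set G : ℤ × ℤ → PowerSeries ℤ := fun p => M ((2 * p.1 + 1) * sg p.1 * sg p.2)
    (tri (p.1 + 1 - 2 * p.2) + sqn p.2) with hG
  have s4 : HasSum G (2 * J 1 ^ 3 * φ) := by
    convert s3 using 1
    funext p
    obtain ⟨n, j⟩ := p
    simp only [hG, e1, Function.comp, Equiv.coe_fn_mk]
    congr 1
    have : sg (n + 1 - 2 * j) = - sg n := by
      rw [sub_eq_add_neg, sg_add, sg_add, sg_neg, sg_two_mul, sg_one]; ring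
    rw [this]; ring
  have Gfin : ∀ d, {p : ℤ × ℤ | tri (p.1 + 1 - 2 * p.2) + sqn p.2 = d}.Finite := by
    intro d
    exact ((fin_eq (fin_add tri_fin sqn_fin) d).preimage e1.injective.injOn)
  have Gs : ∀ r : ℤ, ∃ s, HasSum (fun p : ℤ × ℤ => if p.1 % 3 = r then G p else 0) s := by
    intro r
    have := M_summable (fun p : ℤ × ℤ => if p.1 % 3 = r then (2 * p.1 + 1) * sg p.1 * sg p.2 else 0) _ Gfin
    obtain ⟨s, hs⟩ := this
    refine ⟨s, ?_⟩
    convert hs using 1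
    funext p
    split_ifs
    · rfl
    · rw [M_zero]
  obtain ⟨H0, h0⟩ := Gs 0
  obtain ⟨H1, h1⟩ := Gs 1
  obtain ⟨H2, h2⟩ := Gs 2
  have htot : 2 * J 1 ^ 3 * φ = H0 + H1 + H2 := by
    refine s4.unique ?_
    convert (h0.add h1).add h2 using 1
    funext p
    have : p.1 % 3 = 0 ∨ p.1 % 3 = 1 ∨ p.1 % 3 = 2 := by omega
    rcases this with h | h | h <;> simp [h]
  have t0 : HasSum (fun p : ℤ × ℤ => G (3 * p.1, p.2)) H0 := by
    have inj : Function.Injective (fun p : ℤ × ℤ => (3 * p.1, p.2)) := by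
      rintro ⟨a, b⟩ ⟨c, d⟩ h; simp at h; simp [h]
    rw [← inj.hasSum_iff] at h0
    · convert h0 using 1
      funext p; simp
    · rintro ⟨a, b⟩ hx
      rw [if_neg]
      intro h; apply hx; refine ⟨(a / 3, b), ?_⟩; ext <;> simp; simp at h; omega
  have t1 : HasSum (fun p : ℤ × ℤ => G (3 * p.1 + 1, p.2)) H1 := by
    have inj : Function.Injective (fun p : ℤ × ℤ => (3 * p.1 + 1, p.2)) := by
      rintro ⟨a, b⟩ ⟨c, d⟩ h; simp at h; simp [h]
    rw [← inj.hasSum_iff] at h1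
    · convert h1 using 1
      funext p; simp
    · rintro ⟨a, b⟩ hx
      rw [if_neg]
      intro h; apply hx; refine ⟨(a / 3, b), ?_⟩; ext <;> simp; simp at h; omega
  have t2 : HasSum (fun p : ℤ × ℤ => G (-1 - 3 * p.1, p.2)) H2 := by
    have inj : Function.Injective (fun p : ℤ × ℤ => (-1 - 3 * p.1, p.2)) := by
      rintro ⟨a, b⟩ ⟨c, d⟩ h; simp at h; simp [h]
    rw [← inj.hasSum_iff] at h2
    · convert h2 using 1
      funext p
      have : (-1 - 3 * p.1) % 3 = 2 := by omega
      simp [this]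
    · rintro ⟨a, b⟩ hx
      rw [if_neg]
      intro h; apply hx; refine ⟨(-1 - a / 3, b), ?_⟩; ext <;> simp; simp at h; omega
  have hH2 : H2 = H0 := by
    let e2 : ℤ × ℤ ≃ ℤ × ℤ := Equiv.prodCongr (Equiv.refl _) (Equiv.neg _)
    have := (Equiv.hasSum_iff e2).2 t2
    refine this.unique ?_
    convert t0 using 1
    funext p
    obtain ⟨l, j⟩ := p
    simp only [Function.comp, e2, hG, Equiv.prodCongr_apply, Prod.map, Equiv.refl_apply, Equiv.neg_apply]
    congr 1
    · have : sg (-1 - 3 * l) = - sg (3 * l) := by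
        rw [sub_eq_add_neg, sg_add, sg_neg, sg_neg, sg_one]; ring
      rw [this, sg_neg]; ring
    · have a := tri_spec (-1 - 3 * l + 1 - 2 * -j)
      have b := tri_spec (3 * l + 1 - 2 * j)
      have c := sqn_spec (-j)
      have d := sqn_spec j
      zify
      apply mul_left_cancel₀ (two_ne_zero (α := ℤ))
      linear_combination a - b + 2 * c - 2 * d
  have hH1 : H1 = 0 := by
    let e2 : ℤ × ℤ ≃ ℤ × ℤ :=
    { toFun := fun p => (p.1, 2 * p.1 + 1 - p.2)
      invFun := fun p => (p.1, 2 * p.1 + 1 - p.2)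
      left_inv := fun p => by ext <;> simp
      right_inv := fun p => by ext <;> simp }
    have := (Equiv.hasSum_iff e2).2 t1
    apply eq_zero_of_neg
    refine this.unique ?_
    have t1n := t1.neg
    have hfun : ((fun p : ℤ × ℤ => G (3 * p.1 + 1, p.2)) ∘ e2) = fun p : ℤ × ℤ => - G (3 * p.1 + 1, p.2) := ?_
    · rw [hfun]; exact t1n
    funext p
    obtain ⟨l, j⟩ := p
    simp only [Function.comp, e2, hG, Equiv.coe_fn_mk, M_neg]
    congr 1
    · have : sg (2 * l + 1 - j) = - sg j := by
        rw [sub_eq_add_neg, sg_add, sg_neg, sg_add, sg_two_mul, sg_one]; ring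
      rw [this]; ring
    · have a := tri_spec (3 * l + 1 + 1 - 2 * (2 * l + 1 - j))
      have b := tri_spec (3 * l + 1 + 1 - 2 * j)
      have c := sqn_spec (2 * l + 1 - j)
      have d := sqn_spec j
      zify
      apply mul_left_cancel₀ (two_ne_zero (α := ℤ))
      linear_combination a - b + 2 * c - 2 * d
  have hH0 : H0 = g * J 2 := by
    let e2 : ℤ × ℤ ≃ ℤ × ℤ :=
    { toFun := fun p => (-p.1, p.2 - p.1)
      invFun := fun p => (-p.1, p.2 - p.1)
      left_inv := fun p => by ext <;> simp
      right_inv := fun p => by ext <;> simp }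
    have := (Equiv.hasSum_iff e2).2 t0
    refine this.unique ?_
    have p2 : ∀ d, {i | 2 * pentagonal i ≤ d}.Finite := fun d =>
      (pent_fin d).subset fun i hi => by simp only [Set.mem_ofPred_eq] at hi ⊢; omega
    convert M_mulsum pent_fin p2 hg hJ2 using 1
    funext p
    obtain ⟨l, j⟩ := p
    simp only [Function.comp, e2, hG, Equiv.coe_fn_mk]
    congr 1
    · have : sg (3 * -l) * sg (j - l) = sg j := by
        have e : 3 * -l + (j - l) = j + 2 * (-2 * l) := by ring
        rw [← sg_add, e, sg_add, sg_two_mul, mul_one]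
      rw [← this]; ring
    · have a := tri_spec (3 * -l + 1 - 2 * (j - l))
      have b := two_mul_natCast_pentagonal l
      have c := sqn_spec (j - l)
      have d := two_mul_natCast_pentagonal j
      zify
      apply mul_left_cancel₀ (two_ne_zero (α := ℤ))
      linear_combination a - b + 2 * c - 2 * d
  rw [hH0, hH1, hH2, hH0] at htot
  have h4 : J 1 ^ 3 * φ = g * J 2 := by
    have : (2 : PowerSeries ℤ) * (J 1 ^ 3 * φ) = 2 * (g * J 2) := by linear_combination htot
    exact mul_left_cancel₀ two_ne this
  linear_combination -J 2 * h4 + J 1 ^ 3 * hφ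
end Tower

namespace Tower
open PowerSeries Finset
open scoped PowerSeries.WithPiTopology

/-- power series mod 7 -/
abbrev F := PowerSeries (ZMod 7)
instance fact7 : Fact (Nat.Prime 7) := ⟨by norm_num⟩
instance charF : CharP F 7 :=
  charP_of_injective_ringHom (f := (C (R := ZMod 7))) PowerSeries.C_injective 7

/-- reduction -/
def r : PowerSeries ℤ →+* F := PowerSeries.map (Int.castRingHom (ZMod 7))
lemma coeff_r (n : ℕ) (f : PowerSeries ℤ) : coeff n (r f) = ((coeff n f : ℤ) : ZMod 7) := by simp [r]
lemma r_X : r X = X := by simp [r]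
lemma r_expand (k : ℕ) (hk : k ≠ 0) (f : PowerSeries ℤ) : r (expand k hk f) = expand k hk (r f) := by
  simp [r, map_expand]

lemma expand_seven (f : F) : expand 7 (by norm_num) f = f ^ 7 := by
  have h := MvPowerSeries.map_frobenius_expand (σ := Unit) (R := ZMod 7) 7 (by norm_num) (f := f)
  rw [ZMod.frobenius_zmod] at h
  rw [← h]
  ext n
  simp [PowerSeries.expand]

/-- theta operator -/
def th : Derivation (ZMod 7) F F := (X : F) • PowerSeries.derivative (ZMod 7)

lemma coeff_th (n : ℕ) (f : F) : coeff n (th f) = n * coeff n f := by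
  have : th f = X * PowerSeries.derivative (ZMod 7) f := rfl
  rw [this]
  cases n with
  | zero => simp
  | succ n => rw [coeff_succ_X_mul, coeff_derivative]; push_cast; ring

lemma th_mul (f g : F) : th (f * g) = f * th g + g * th f := by
  rw [Derivation.leibniz]; simp
lemma th_pow (f : F) (n : ℕ) : th (f ^ n) = n * f ^ (n - 1) * th f := by
  rw [Derivation.leibniz_pow]; simp [mul_assoc]
lemma th_one : th 1 = 0 := by simp
lemma th_nat (n : ℕ) : th (n : F) = 0 := by simp
lemma th_ofNat (n : ℕ) [n.AtLeastTwo] : th (OfNat.ofNat n : F) = 0 := by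
  have := th_nat (OfNat.ofNat n)
  simpa using this
lemma th_num (n : ℕ) (f : F) : th (n * f) = n * th f := by rw [th_mul, th_nat]; ring
lemma th_X : th X = X := by
  have : th X = X * PowerSeries.derivative (ZMod 7) X := rfl
  rw [this]; simp

lemma th_pow7 (h : F) : th (h ^ 7) = 0 := by
  rw [th_pow]
  have : ((7 : ℕ) : F) = 0 := CharP.cast_eq_zero F 7
  rw [this]; ring

lemma th_expand (k : ℕ) (hk : k ≠ 0) (f : F) : th (expand k hk f) = k * expand k hk (th f) := by
  ext n
  have : (k : F) = C (k : ZMod 7) := by simp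
  rw [coeff_th, this, coeff_C_mul, coeff_expand, coeff_expand, coeff_th]
  split_ifs with h
  · obtain ⟨m, rfl⟩ := h
    rw [Nat.mul_div_cancel_left _ (Nat.pos_of_ne_zero hk)]; push_cast; ring
  · simp

/-- generic weight lemma -/
lemma weight {ι : Type*} (c c' : ι → ℤ) (E : ι → ℕ) (f f' : PowerSeries ℤ)
    (hf : HasSum (fun i => M (c i) (E i)) f) (hf' : HasSum (fun i => M (c' i) (E i)) f')
    (w : ZMod 7 → ZMod 7) (h : ∀ i, w (E i) * (c i : ZMod 7) + c' i = 0) (n : ℕ) :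
    w n * coeff n (r f) + coeff n (r f') = 0 := by
  rw [PowerSeries.WithPiTopology.hasSum_iff_hasSum_coeff] at hf hf'
  have h1 := (hf n).map (Int.castAddHom (ZMod 7)) continuous_of_discreteTopology
  have h2 := (hf' n).map (Int.castAddHom (ZMod 7)) continuous_of_discreteTopology
  have h3 := (h1.mul_left (w n)).add h2
  rw [coeff_r, coeff_r]
  refine h3.unique ?_
  convert hasSum_zero using 2 with i
  simp only [Function.comp, coeff_M]
  split_ifs with hi
  · have := h i
    rw [← hi] at this
    simpa using this
  · simp

/-- the shifted third power operator -/
lemma weight3 (k : ℕ) (f f' : F) (h : ∀ n : ℕ, ((n : ZMod 7) + k) ^ 3 * coeff n f + coeff n f' = 0) :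
    th (th (th f)) + 3 * k * th (th f) + 3 * k ^ 2 * th f + k ^ 3 * f + f' = 0 := by
  ext n
  have e : ∀ m : ℕ, (m : F) = C (m : ZMod 7) := fun m => by simp
  have : (3 * k : F) = C ((3 * k : ℕ) : ZMod 7) := by rw [← e]; push_cast; rfl
  rw [this]
  have : (3 * k ^ 2 : F) = C ((3 * k ^ 2 : ℕ) : ZMod 7) := by rw [← e]; push_cast; rfl
  rw [this]
  have : (k ^ 3 : F) = C ((k ^ 3 : ℕ) : ZMod 7) := by rw [← e]; push_cast; rfl
  rw [this]
  simp only [map_add, coeff_C_mul, coeff_th, map_zero]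
  have := h n
  rw [← this]; push_cast; ring

lemma zpow6 (s : ZMod 7) : s * s ^ 6 = s := by revert s; decide
lemma zmod_inv (s : ZMod 7) (a b : ZMod 7) (h : s * a = s * b) (hs : s ≠ 0) : a = b :=
  mul_left_cancel₀ hs h

lemma ode_jac : th (th (th (r (J 1 ^ 3)))) + 3 * th (th (r (J 1 ^ 3))) + 3 * th (r (J 1 ^ 3)) = 0 := by
  have hJ : HasSum (fun m : ℤ => M (-(sg m * (2 * m - 1))) (tri m)) (2 * J 1 ^ 3) := jacobi
  have := weight _ _ _ _ _ hJ hJ (fun e => (e + 1) ^ 3 - 2) (by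
    intro m
    have h := congrArg (Int.cast (R := ZMod 7)) (tri_spec m)
    push_cast at h ⊢
    have h1 : (tri m : ZMod 7) + 1 = (2 * m - 1) ^ 2 := by
      have e : (8 : ZMod 7) = 1 := rfl
      linear_combination 4 * h - (tri m : ZMod 7) * e
    rw [h1]
    linear_combination -(sg m : ZMod 7) * zpow6 (2 * (m : ZMod 7) - 1))
  have h3 := weight3 1 (r (2 * J 1 ^ 3)) (- r (2 * J 1 ^ 3)) (by
    intro n; have := this n; rw [map_neg]; push_cast; linear_combination this)
  rw [map_mul, map_ofNat] at h3
  have e2 : ∀ f, th (2 * f) = 2 * th f := fun f => th_num 2 f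
  rw [e2, e2, e2] at h3
  grind

lemma pent_spec7 (m : ℤ) : (pentagonal m : ZMod 7) + 5 = 5 * (1 - 6 * m) ^ 2 := by
  have h := congrArg (Int.cast (R := ZMod 7)) (two_mul_natCast_pentagonal m)
  push_cast at h
  have e : (7 : ZMod 7) = 0 := rfl
  linear_combination 4 * h + (-(pentagonal m : ZMod 7) - 24 * m ^ 2 + 8 * m) * e

lemma ode_g (g : PowerSeries ℤ) (hg : HasSum (fun n : ℤ => M (1 - 6 * n) (pentagonal n)) g) :
    th (th (th (r g))) + th (th (r g)) + 5 * th (r g) = 0 := by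
  have := weight _ _ _ _ _ hg hg (fun e => (e + 5) ^ 3) (by
    intro m
    rw [pent_spec7]
    push_cast
    have e : (7 : ZMod 7) = 0 := rfl
    linear_combination 125 * zpow6 (1 - 6 * (m : ZMod 7)) + 18 * (1 - 6 * (m : ZMod 7)) * e)
  have h3 := weight3 5 (r g) (r g) (by intro n; have := this n; exact this)
  push_cast at h3
  grind

lemma ode_pent : th (th (th (r (J 1)))) + th (th (r (J 1))) + 5 * th (r (J 1)) + X ^ 2 * (r (J 1)) ^ 49 = 0 := by
  have hJ := J1_sum
  have hmask : HasSum (fun n : ℤ => M (if (7 : ℤ) ∣ n + 1 then - sg n else 0) (pentagonal n))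
      (X ^ 2 * expand 49 (by norm_num) (J 1)) := by
    have h1 := M_expand _ _ _ 49 (by norm_num) J1_sum
    have h2 := h1.mul_left (M 1 2)
    simp only [M_mul, one_mul] at h2
    have e : M 1 2 = X ^ 2 := by simp [M]
    rw [e] at h2
    have inj : Function.Injective (fun k : ℤ => 7 * k - 1) := by
      intro a b h; simp only at h; omega
    rw [← inj.hasSum_iff]
    · have hfun : ((fun n : ℤ => M (if (7 : ℤ) ∣ n + 1 then - sg n else 0) (pentagonal n)) ∘
          (fun k : ℤ => 7 * k - 1)) = fun i => M (sg i) (2 + 49 * pentagonal i) := ?_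
      · rw [hfun]; exact h2
      funext k
      simp only [Function.comp]
      rw [if_pos (by omega)]
      congr 1
      · have : sg (7 * k - 1) = sg (k + 2 * (3 * k)) * sg (-1) := by rw [← sg_add]; congr 1; ring
        rw [this, sg_add, sg_two_mul, sg_neg, sg_one]; ring
      · have a := two_mul_natCast_pentagonal k
        have b := two_mul_natCast_pentagonal (7 * k - 1)
        zify
        apply mul_left_cancel₀ (two_ne_zero (α := ℤ))
        linear_combination b - 49 * a
    · intro x hx
      rw [if_neg, M_zero]
      rintro ⟨k, hk⟩
      exact hx ⟨k, by simp only; omega⟩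
  have hadd := hJ.add hmask
  simp only [M_add] at hadd
  have hw := weight _ _ _ _ _ hJ hadd (fun e => (e + 5) ^ 3) (by
    intro m
    rw [pent_spec7]
    push_cast
    have e : (7 : ZMod 7) = 0 := rfl
    have hs : (1 - 6 * (m : ZMod 7)) = ((m + 1 : ℤ) : ZMod 7) := by
      push_cast; linear_combination - (m : ZMod 7) * e
    by_cases hm : (7 : ℤ) ∣ m + 1
    · have h0 : ((m + 1 : ℤ) : ZMod 7) = 0 := (ZMod.intCast_zmod_eq_zero_iff_dvd (m + 1) 7).2 hm
      rw [hs, h0, if_pos hm]; push_cast; ring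
    · have h0 : ((m + 1 : ℤ) : ZMod 7) ≠ 0 := fun h => hm ((ZMod.intCast_zmod_eq_zero_iff_dvd (m + 1) 7).1 h)
      have h6 : ((m + 1 : ℤ) : ZMod 7) ^ 6 = 1 :=
        zmod_inv _ _ _ (by rw [zpow6, mul_one]) h0
      rw [hs, if_neg hm]
      push_cast at h6 ⊢
      linear_combination 125 * (sg m : ZMod 7) * h6 + 18 * (sg m : ZMod 7) * e)
  have h3 := weight3 5 (r (J 1)) _ hw
  push_cast at h3
  have e49 : r (expand 49 (by norm_num) (J 1)) = r (J 1) ^ 49 := by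
    rw [r_expand]
    have : expand 49 (by norm_num) (r (J 1)) = expand 7 (by norm_num) (expand 7 (by norm_num) (r (J 1))) := by
      rw [← expand_mul]
    rw [this, expand_seven, expand_seven]; ring
  rw [map_add, map_mul, map_pow, r_X, e49] at h3
  grind
end Tower

namespace Tower
open PowerSeries Finset

/-- J mod 7 -/
def j1 : F := r (J 1)
/-- J2 mod 7 -/
def j2 : F := r (J 2)
/-- Delta -/
def D1 : F := X * j1 ^ 24
/-- Delta2 -/
def D2 : F := X ^ 2 * j2 ^ 24

lemma j1_unit : IsUnit j1 := (J_unit 1 le_rfl).map r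
lemma j2_unit : IsUnit j2 := (J_unit 2 (by norm_num)).map r
lemma expand_j1 : expand 2 two_ne_zero j1 = j2 := by
  rw [j1, ← r_expand, expand_J 1 2 le_rfl, j2]
lemma expand_D1 : expand 2 two_ne_zero D1 = D2 := by
  rw [D1, map_mul, map_pow, expand_j1, expand_X, D2]

lemma th2 : th (2 : F) = 0 := th_ofNat 2
lemma th3 : th (3 : F) = 0 := th_ofNat 3
lemma th4 : th (4 : F) = 0 := th_ofNat 4
lemma th5 : th (5 : F) = 0 := th_ofNat 5
lemma th25 : th (25 : F) = 0 := th_ofNat 25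

lemma n_inj (n : ℕ) [n.AtLeastTwo] (f : F) : th (OfNat.ofNat n * f) = OfNat.ofNat n * th f := by
  rw [th_mul, th_ofNat]; ring

lemma ode1 : ∃ P : F, th j1 = 5 * (P - 1) * j1 ∧ th D1 = P * D1 ∧
    5 * th (th P) + 5 * P * th P - P ^ 3 = -1 - D1 ^ 2 ∧ P ^ 3 + 3 * P * th P + th (th P) = 1 := by
  obtain ⟨k, hk⟩ := j1_unit.exists_right_inv
  obtain ⟨P, hP⟩ : ∃ P : F, P = 1 + 3 * (th j1 * k) := ⟨_, rfl⟩
  have h1 : th j1 = 5 * (P - 1) * j1 := by grind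
  have h2 : th (th j1) = (5 * th P + 25 * (P - 1) ^ 2) * j1 := by
    have : th (th j1) = th (5 * (P - 1) * j1) := congrArg th h1
    rw [this]
    simp only [th_mul, map_sub, th_one, th5, h1]
    ring
  have h3 : th (th (th j1)) = (5 * th (th P) + 75 * (P - 1) * th P + 125 * (P - 1) ^ 3) * j1 := by
    have : th (th (th j1)) = th ((5 * th P + 25 * (P - 1) ^ 2) * j1) := congrArg th h2
    rw [this]
    simp only [th_mul, map_sub, map_add, th_pow, th_one, th5, th25, h1]
    push_cast
    ring
  have hD : th D1 = P * D1 := by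
    rw [D1, th_mul, th_pow, th_X, h1]
    push_cast
    try rw [show 24 - 1 = 23 from rfl]
    grind
  refine ⟨P, h1, hD, ?_, ?_⟩
  · have ho := ode_pent
    change th (th (th j1)) + th (th j1) + 5 * th j1 + X ^ 2 * j1 ^ 49 = 0 at ho
    rw [h3, h2, h1] at ho
    apply j1_unit.mul_left_cancel
    rw [D1]
    clear hk hP h1 h2 h3 hD
    generalize th (th P) = P2 at *
    generalize th P = P1 at *
    generalize j1 = j at *
    generalize (X : F) = x at *
    grind
  · have ho := ode_jac
    rw [map_pow] at ho
    change th (th (th (j1 ^ 3))) + 3 * th (th (j1 ^ 3)) + 3 * th (j1 ^ 3) = 0 at ho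
    have a1 : th (j1 ^ 3) = (P - 1) * j1 ^ 3 := by
      rw [th_pow, h1]; push_cast; grind
    have a2 : th (th (j1 ^ 3)) = (th P + (P - 1) ^ 2) * j1 ^ 3 := by
      rw [a1, th_mul, a1, map_sub, th_one]; ring
    have a3 : th (th (th (j1 ^ 3))) = (th (th P) + 3 * (P - 1) * th P + (P - 1) ^ 3) * j1 ^ 3 := by
      rw [a2, th_mul, a1, map_add, th_pow, map_sub, th_one]; push_cast; ring
    rw [a3, a2, a1] at ho
    apply (j1_unit.pow 3).mul_left_cancel
    clear hk hP h1 h2 h3 hD a1 a2 a3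
    generalize th (th P) = P2 at *
    generalize th P = P1 at *
    generalize j1 = j at *
    grind

lemma D1_coeff0 : coeff 0 D1 = 0 := by simp [D1]
lemma j1_const : constantCoeff j1 = 1 := by
  have := congrArg (Int.cast (R := ZMod 7)) (J_const 1 le_rfl)
  have h := coeff_r 0 (J 1)
  rw [coeff_zero_eq_constantCoeff_apply, coeff_zero_eq_constantCoeff_apply] at h
  rw [j1, h, this]; simp
lemma D1_coeff1 : coeff 1 D1 = 1 := by
  rw [D1, show (1 : ℕ) = 0 + 1 from rfl, coeff_succ_X_mul]
  simp [j1_const]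
lemma j1_coeff1 : coeff 1 j1 = -1 := by
  rw [j1, coeff_r]
  have : coeff 1 (J 1) = -1 := by
    simp only [J, coeff_mk, prod_range_succ, prod_range_zero]
    have : (1 : PowerSeries ℤ) * (1 - X ^ (1 * (0 + 1))) * (1 - X ^ (1 * (1 + 1))) = 1 - X - X ^ 2 + X ^ 3 := by ring
    rw [this]
    simp [coeff_X_pow, coeff_one]
  rw [this]; simp

lemma paramQ : ∃ Q : F, th j1 = 5 * (Q ^ 2 - 1) * j1 ∧ Q ^ 3 = 1 - D1 ∧ th Q = 2 * D1 ∧ constantCoeff Q = 1 := by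
  obtain ⟨P, hj, hD, ha, hb⟩ := ode1
  have h1 : 4 * P * th P = 1 - D1 ^ 2 - P ^ 3 := by grind
  have h2 := congrArg th h1
  simp only [th_mul, map_sub, th_one, th4, th_pow, hD] at h2
  push_cast at h2
  have h3 : (P ^ 3 - 1 - D1 ^ 2) ^ 2 = 4 * D1 ^ 2 := by
    generalize th (th P) = P2 at *
    generalize th P = P1 at *
    grind
  have h4 : (P ^ 3 - (1 - D1) ^ 2) * (P ^ 3 - (1 + D1) ^ 2) = 0 := by linear_combination h3
  have c0 : constantCoeff P = 1 := by
    have := congrArg (coeff 0) hj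
    rw [coeff_th] at this
    have e5 : (5 : F) = C 5 := (map_ofNat _ 5).symm
    rw [e5] at this
    simp [j1_const, sub_eq_zero] at this
    rcases this with h | h
    · exact absurd h (by decide)
    · exact h
  have c1 : coeff 1 P = 4 := by
    have := congrArg (coeff 1) hj
    rw [coeff_th, j1_coeff1] at this
    have e5 : (5 : F) = C 5 := (map_ofNat _ 5).symm
    rw [e5, mul_assoc, coeff_C_mul, coeff_mul, Finset.Nat.antidiagonal_succ] at this
    simp [j1_const, c0, coeff_one] at this
    have e : (15 : ZMod 7) = 1 := rfl
    have e2 : (7 : ZMod 7) = 0 := rfl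
    linear_combination -3 * this - (coeff 1 P) * e - e2
  have hP3 : P ^ 3 = (1 - D1) ^ 2 := by
    rcases mul_eq_zero.1 h4 with h | h
    · linear_combination h
    · exfalso
      have hh : P * (P * P) = 1 + 2 * D1 + D1 * D1 := by linear_combination h
      have := congrArg (coeff 1) hh
      have e5 : (2 : F) = C 2 := (map_ofNat _ 2).symm
      rw [e5] at this
      simp [coeff_mul, Finset.Nat.antidiagonal_succ, c0, c1, D1_coeff1, coeff_one] at this
      have z : constantCoeff D1 = 0 := by simpa using D1_coeff0
      rw [z] at this
      exact absurd this (by simp; decide)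
  have Pu : IsUnit P := by rw [PowerSeries.isUnit_iff_constantCoeff, c0]; exact isUnit_one
  obtain ⟨K, hK⟩ := Pu.exists_right_inv
  set Q := (1 - D1) * K with hQd
  have hQ2 : Q ^ 2 = P := by
    calc Q ^ 2 = (1 - D1) ^ 2 * K ^ 2 := by rw [hQd]; ring
      _ = P * (P * K) ^ 2 := by rw [← hP3]; ring
      _ = P := by rw [hK]; ring
  have hQ3 : Q ^ 3 = 1 - D1 := by
    calc Q ^ 3 = Q ^ 2 * Q := by ring
      _ = (1 - D1) * (P * K) := by rw [hQ2, hQd]; ring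
      _ = _ := by rw [hK]; ring
  refine ⟨Q, by rw [hQ2]; exact hj, hQ3, ?_, ?_⟩
  · have := congrArg th hQ3
    rw [th_pow, map_sub, th_one, hD] at this
    push_cast at this
    rw [hQ2] at this
    apply Pu.mul_left_cancel
    grind
  · have k0 : constantCoeff K = 1 := by
      have := congrArg (constantCoeff (R := ZMod 7)) hK
      simpa [c0] using this
    have z : constantCoeff D1 = 0 := by simpa using D1_coeff0
    simp [hQd, k0, z]

lemma aux1 (a b : F) (h : (2 - a ^ 3) * 2 * (1 - a ^ 3) + (1 - 4 * b ^ 3) * 4 * (1 - b ^ 3)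
      + 3 * (4 * a ^ 2 + b ^ 2 - 5) * (2 * a - 2 * a ^ 4 + b - b ^ 4) + (4 * a ^ 2 + b ^ 2 - 5) ^ 3
      + (2 * a - 2 * a ^ 4 + b - b ^ 4 + (4 * a ^ 2 + b ^ 2 - 5) ^ 2) + 5 * (4 * a ^ 2 + b ^ 2 - 5) = 0) :
    (2 * b ^ 2 - a ^ 2) * (2 * a - b) = 1 := by
  have h2 : (4*a^2+b^2)^3+3*(4*a^2+b^2)*(2*a-2*a^4+b-b^4)+((2-a^3)*2*(1-a^3)+(1-4*b^3)*4*(1-b^3)) = -1 := by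
    grind
  clear h
  grind

theorem paramA : ∃ A v : F, A * v = 1 ∧ th A = v - A ^ 5 ∧ constantCoeff A = 1 ∧
    D1 * A ^ 3 = (A ^ 3 - 1) * (A ^ 3 + 1) ^ 2 ∧ D2 * A ^ 3 = (A ^ 3 - 1) ^ 2 * (A ^ 3 + 1) ∧
    th j1 = 5 * ((2 * v - A ^ 2) ^ 2 - 1) * j1 ∧ th j2 = 3 * ((3 * v - 2 * A ^ 2) ^ 2 - 1) * j2 := by
  obtain ⟨a, hj, ha3, hta, hca⟩ := paramQ
  obtain ⟨g, hg, hgs⟩ := quintuple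
  set b := expand 2 two_ne_zero a with hb
  have e5 : expand 2 two_ne_zero (5 : F) = 5 := map_ofNat _ 5
  have e2 : expand 2 two_ne_zero (2 : F) = 2 := map_ofNat _ 2
  have hb3 : b ^ 3 = 1 - D2 := by
    rw [hb, ← map_pow, ha3, map_sub, map_one, expand_D1]
  have htb : th b = 4 * D2 := by
    rw [hb, th_expand, hta, map_mul, expand_D1, e2]; push_cast; ring
  have hj2 : th j2 = 3 * (b ^ 2 - 1) * j2 := by
    rw [← expand_j1, th_expand, hj, map_mul, map_mul, map_sub, map_pow, map_one, expand_j1, e5, ← hb]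
    push_cast; grind
  have hcb : constantCoeff b = 1 := by
    have : coeff 0 b = 1 := by
      rw [hb, coeff_expand, if_pos (dvd_zero _)]; simpa using hca
    simpa using this
  set G := r g with hG
  have hGj : G * j2 ^ 2 = j1 ^ 5 := by
    have := congrArg r hg
    simpa [hG, j1, j2] using this
  have Gu : IsUnit G := by
    refine isUnit_of_mul_isUnit_left (y := j2 ^ 2) ?_
    rw [hGj]; exact j1_unit.pow 5
  obtain ⟨y, hy⟩ : ∃ y : F, y = 4 * a ^ 2 + b ^ 2 := ⟨_, rfl⟩
  have hG1 : th G = (y - 5) * G := by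
    have h := congrArg th hGj
    simp only [th_mul, th_pow, hj, hj2] at h
    push_cast at h
    apply (j2_unit.pow 2).mul_left_cancel
    grind
  have hy1 : th y = 2 * a - 2 * a ^ 4 + b - b ^ 4 := by
    rw [hy, map_add, th_mul, th_pow, th_pow, th_ofNat, hta, htb]; push_cast; grind
  have hy2 : th (th y) = (2 - a ^ 3) * 2 * (1 - a ^ 3) + (1 - 4 * b ^ 3) * 4 * (1 - b ^ 3) := by
    rw [hy1, map_sub, map_add, map_sub, th_mul, th_mul, th_pow, th_pow, th_ofNat, hta, htb]; push_cast; grind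
  have hG2 : th (th G) = (th y + (y - 5) ^ 2) * G := by
    rw [hG1, th_mul, hG1, map_sub, th_ofNat]; ring
  have hG3 : th (th (th G)) = (th (th y) + 3 * (y - 5) * th y + (y - 5) ^ 3) * G := by
    rw [hG2, th_mul, hG1, map_add, th_pow, map_sub, th_ofNat]; push_cast; ring
  have hode := ode_g g hgs
  rw [← hG, hG3, hG2, hG1] at hode
  have hR : (2 * b ^ 2 - a ^ 2) * (2 * a - b) = 1 := by
    have h : G * ((th (th y) + 3 * (y - 5) * th y + (y - 5) ^ 3) + (th y + (y - 5) ^ 2) + 5 * (y - 5)) = G * 0 := by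
      linear_combination hode
    have h := Gu.mul_left_cancel h
    rw [hy2, hy1, hy] at h
    exact aux1 a b h
  clear_value b
  clear hode hG3 hG2 hy2 hy1 hG1 hGj
  obtain ⟨A, hA⟩ : ∃ A, A = 2 * b ^ 2 - a ^ 2 := ⟨_, rfl⟩
  obtain ⟨v, hv⟩ : ∃ v, v = 2 * a - b := ⟨_, rfl⟩
  have hAv : A * v = 1 := by rw [hA, hv]; exact hR
  have hA2 : A ^ 2 = 3 * a - 2 * b := by
    have h1 : (3 * a - 2 * b) * v ^ 2 = 1 := by rw [hv]; grind
    calc A ^ 2 = ((3 * a - 2 * b) * v ^ 2) * A ^ 2 := by rw [h1]; ring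
      _ = (3 * a - 2 * b) * (A * v) ^ 2 := by ring
      _ = _ := by rw [hAv]; ring
  have ea : a = 2 * v - A ^ 2 := by rw [hv, hA2]; ring
  have eb : b = 3 * v - 2 * A ^ 2 := by rw [hv, hA2]; ring
  have hD1 : D1 = 1 - a ^ 3 := by linear_combination ha3
  have hD2 : D2 = 1 - b ^ 3 := by linear_combination hb3
  have htA : th A = 16 * b * (1 - b ^ 3) - 4 * a * (1 - a ^ 3) := by
    rw [hA, map_sub, th_mul, th_pow, th_pow, th_ofNat, hta, htb, hD1, hD2]; push_cast; ring
  refine ⟨A, v, hAv, ?_, ?_, ?_, ?_, ?_, ?_⟩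
  · rw [htA, ea, eb]; clear hA hv ha3 hb3 hD1 hD2 hA2 htA ea eb hta htb hj hj2; grind
  · rw [hA]
    have e2 : (2 : F) = C 2 := (map_ofNat _ 2).symm
    rw [e2]; simp [hca, hcb]; rfl
  · rw [hD1, ea]; clear hA hv ha3 hb3 hD1 hD2 hA2 htA ea eb hta htb hj hj2; grind
  · rw [hD2, eb]; clear hA hv ha3 hb3 hD1 hD2 hA2 htA ea eb hta htb hj hj2; grind
  · rw [← ea]; exact hj
  · rw [← eb]; exact hj2
end Tower

namespace Tower
open PowerSeries Finset

/-- the operator U_7 -/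
def U7 {R : Type} [CommRing R] : PowerSeries R →ₗ[R] PowerSeries R where
  toFun f := mk fun n => coeff (7 * n) f
  map_add' f g := by ext n; simp
  map_smul' c f := by ext n; simp

lemma coeff_U7 {R : Type} [CommRing R] (f : PowerSeries R) (n : ℕ) : coeff n (U7 f) = coeff (7 * n) f := by
  simp [U7]

lemma U7_expand {R : Type} [CommRing R] (h f : PowerSeries R) :
    U7 (expand 7 (by norm_num) h * f) = h * U7 f := by
  ext n
  rw [coeff_U7, coeff_mul, coeff_mul]
  have e : (Finset.HasAntidiagonal.antidiagonal n).image (fun p : ℕ × ℕ => (7 * p.1, 7 * p.2)) ⊆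
      Finset.HasAntidiagonal.antidiagonal (7 * n) := by
    intro p hp
    rw [Finset.mem_image] at hp
    obtain ⟨⟨a, b⟩, h, rfl⟩ := hp
    rw [Finset.HasAntidiagonal.mem_antidiagonal] at h ⊢
    simp only at h ⊢
    omega
  rw [← Finset.sum_subset e, Finset.sum_image]
  · refine sum_congr rfl fun p hp => ?_
    rw [coeff_U7, coeff_expand, if_pos (dvd_mul_right _ _), Nat.mul_div_cancel_left _ (by norm_num)]
  · rintro ⟨a, b⟩ _ ⟨a', b'⟩ _ h
    simp only [Prod.mk.injEq] at h ⊢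
    omega
  · rintro ⟨i, l⟩ hp hnp
    rw [coeff_expand, if_neg, zero_mul]
    rintro ⟨k, hk⟩
    apply hnp
    rw [Finset.HasAntidiagonal.mem_antidiagonal] at hp
    simp only at hp hk
    rw [Finset.mem_image]
    refine ⟨(k, n - k), ?_, ?_⟩
    · rw [Finset.HasAntidiagonal.mem_antidiagonal]; simp only; omega
    · simp only [Prod.mk.injEq]; omega

lemma U7_r (f : PowerSeries ℤ) : U7 (r f) = r (U7 f) := by
  ext n; rw [coeff_U7, coeff_r, coeff_r, coeff_U7]

lemma U7_pow (h f : F) : U7 (h ^ 7 * f) = h * U7 f := by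
  rw [← expand_seven, U7_expand]

lemma U7_th (f : F) : U7 (th f) = 0 := by
  ext n; rw [coeff_U7, coeff_th]; 
  have : ((7 * n : ℕ) : ZMod 7) = 0 := by push_cast; rw [show (7 : ZMod 7) = 0 from rfl, zero_mul]
  rw [this]; simp

/-- decomposition formula -/
lemma U7_poly (A v : F) (hAv : A * v = 1) (hA : th A = v - A ^ 5) (f x0 x1 x2 x3 x4 x5 x6 : F)
    (h : f = x0 ^ 7 + x1 ^ 7 * A + x2 ^ 7 * A ^ 2 + x3 ^ 7 * A ^ 3 + x4 ^ 7 * A ^ 4 + x5 ^ 7 * A ^ 5 + x6 ^ 7 * A ^ 6) :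
    U7 f = x0 + x1 * A + x2 * A ^ 2 + x3 * A ^ 3 + x4 * A ^ 4 + x5 * v + x6 := by
  have step (n k : ℕ) (hk : (k * (n + 2) : F) = 1) : U7 (A ^ n) = U7 (A ^ (n + 6)) := by
    have : A ^ n - A ^ (n + 6) = th (k * A ^ (n + 2)) := by
      rw [th_num, th_pow, hA, show n + 2 - 1 = n + 1 by omega]
      push_cast
      linear_combination (-(A ^ n - A ^ (n + 6))) * hk - (k * (n + 2)) * A ^ n * hAv
    rw [← sub_eq_zero, ← map_sub, this, U7_th]
  have c7 : (7 : F) = 0 := by exact_mod_cast CharP.cast_eq_zero F 7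
  have one : U7 (1 : F) = 1 := by
    have := U7_expand (1 : F) 1
    ext n
    rw [coeff_U7]
    simp [coeff_one]
  have B0 (x : F) : U7 (x ^ 7) = x := by
    have := U7_pow x 1
    rwa [mul_one, one, mul_one] at this
  have B1 : U7 A = A := by
    have := step 1 5 (by push_cast; grind)
    rw [pow_one] at this; rw [this]; exact B0 A
  have B2 : U7 (A ^ 2) = A ^ 2 := by
    rw [step 2 2 (by push_cast; grind), step 8 5 (by push_cast; grind)]
    rw [show A ^ (8 + 6) = (A ^ 2) ^ 7 by ring, B0]
  have B3 : U7 (A ^ 3) = A ^ 3 := by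
    rw [step 3 3 (by push_cast; grind), step 9 2 (by push_cast; grind), step 15 5 (by push_cast; grind)]
    rw [show A ^ (15 + 6) = (A ^ 3) ^ 7 by ring, B0]
  have B4 : U7 (A ^ 4) = A ^ 4 := by
    rw [step 4 6 (by push_cast; grind), step 10 3 (by push_cast; grind), step 16 2 (by push_cast; grind), step 22 5 (by push_cast; grind)]
    rw [show A ^ (22 + 6) = (A ^ 4) ^ 7 by ring, B0]
  have B6 : U7 (A ^ 6) = 1 := by
    rw [← step 0 4 (by push_cast; grind), pow_zero, one]
  have B5 : U7 (A ^ 5) = v := by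
    have e1 : A ^ 5 = v ^ 7 * A ^ 6 - th A := by
      rw [hA]
      have : v ^ 7 * A ^ 6 = v := by
        calc v ^ 7 * A ^ 6 = v * (A * v) ^ 6 := by ring
          _ = v := by rw [hAv]; ring
      rw [this]; ring
    rw [e1, map_sub, U7_th, U7_pow, B6]; ring
  rw [h]
  simp only [map_add, U7_pow, B0, B1, B2, B3, B4, B5, B6, mul_one]
end Tower

namespace Tower
open PowerSeries Finset

/-- numerator coefficients -/
def cN : ℕ → ℤ
  | 1 => 1 | 2 => -3 | 3 => 5 | 4 => -5 | 5 => 3 | 6 => -1 | _ => 0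
/-- periodic coefficients -/
def cw (d : ℕ) : ℤ := cN (d % 7)
/-- w series -/
def ww : PowerSeries ℤ := mk cw
/-- S series -/
def S : PowerSeries ℤ := mk fun n => ∑ d ∈ n.divisors, cw d

lemma ww_spec : (1 - X : PowerSeries ℤ) ^ 7 = (1 - X ^ 7) * (1 - 7 * ww) := by
  have h : (1 - X ^ 7) * ww = X - 3 * X ^ 2 + 5 * X ^ 3 - 5 * X ^ 4 + 3 * X ^ 5 - X ^ 6 := by
    have e3 : (3 : PowerSeries ℤ) = C 3 := (map_ofNat _ 3).symm
    have e5 : (5 : PowerSeries ℤ) = C 5 := (map_ofNat _ 5).symm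
    rw [e3, e5]
    ext n
    rw [sub_mul, one_mul, map_sub, coeff_X_pow_mul']
    simp only [map_sub, map_add, coeff_C_mul, coeff_X_pow, coeff_X, ww, coeff_mk, cw]
    split_ifs with h0 <;> try omega
    · rw [show n % 7 = (n - 7) % 7 by omega]; ring
    all_goals
      have : n < 7 := by omega
      interval_cases n <;> simp_all [cN]
  linear_combination 7 * h

lemma ww_expand (k : ℕ) (hk : k ≠ 0) : (1 - X ^ k : PowerSeries ℤ) ^ 7 = (1 - X ^ (7 * k)) * (1 - 7 * expand k hk ww) := by
  have := congrArg (expand k hk) ww_spec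
  have e7 : expand k hk (7 : PowerSeries ℤ) = 7 := map_ofNat _ 7
  simp only [map_mul, map_sub, map_pow, map_one, expand_X, e7, ← pow_mul] at this
  rw [this, mul_comm 7 k]

lemma prod_mod (N : ℕ) (a : ℕ → PowerSeries ℤ) : ∃ h, ∏ k ∈ range N, (1 - 7 * a k) = 1 - 7 * ∑ k ∈ range N, a k + 49 * h := by
  induction N with
  | zero => exact ⟨0, by simp⟩
  | succ N ih =>
    obtain ⟨h, ih⟩ := ih
    rw [prod_range_succ, sum_range_succ, ih]
    exact ⟨h * (1 - 7 * a N) + (∑ k ∈ range N, a k) * a N, by ring⟩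

lemma S_trunc (n : ℕ) : (X : PowerSeries ℤ) ^ (n + 1) ∣ S - ∑ k ∈ range (n + 1), expand (k + 1) (Nat.succ_ne_zero k) ww := by
  rw [X_pow_dvd_iff]
  intro d hd
  rw [map_sub, sub_eq_zero, map_sum, S, coeff_mk]
  rcases Nat.eq_zero_or_pos d with rfl | hd0
  · simp [coeff_expand, ww, cw, cN]
  simp only [coeff_expand, ww, coeff_mk]
  rw [← Nat.sum_div_divisors, ← Finset.sum_filter]
  symm
  refine Finset.sum_bij (fun k _ => k + 1) ?_ ?_ ?_ ?_
  · intro k hk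
    rw [Finset.mem_filter] at hk
    exact Nat.mem_divisors.2 ⟨hk.2, by omega⟩
  · intro a _ b _ h; omega
  · intro b hb
    have h1 := Nat.mem_divisors.1 hb
    have h2 := Nat.le_of_dvd hd0 h1.1
    have h3 := Nat.pos_of_mem_divisors hb
    refine ⟨b - 1, ?_, by omega⟩
    rw [Finset.mem_filter, Finset.mem_range, show b - 1 + 1 = b by omega]
    exact ⟨by omega, h1.1⟩
  · intro k hk; rfl

lemma exists_of_dvd (m : ℤ) (f : PowerSeries ℤ) (h : ∀ n, m ∣ coeff n f) : ∃ g, f = C m * g := by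
  choose c hc using h
  exact ⟨mk c, by ext n; rw [coeff_C_mul, coeff_mk, hc]⟩

lemma S_spec : ∃ h, J 1 ^ 7 = J 7 * (1 - 7 * S) + 49 * h := by
  have : ∀ n, (49 : ℤ) ∣ coeff n (J 1 ^ 7 - J 7 * (1 - 7 * S)) := by
    intro n
    obtain ⟨a, ha⟩ := J_diff 1 le_rfl n (n + 1) (by omega)
    obtain ⟨b, hb⟩ := J_diff 7 (by norm_num) n (n + 1) (by omega)
    obtain ⟨c, hc⟩ := S_trunc n
    obtain ⟨h, hh⟩ := prod_mod (n + 1) (fun k => expand (k + 1) (Nat.succ_ne_zero k) ww)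
    have hq : qp 1 (n + 1) ^ 7 = qp 7 (n + 1) * (1 - 7 * ∑ k ∈ range (n + 1), expand (k + 1) (Nat.succ_ne_zero k) ww + 49 * h) := by
      rw [← hh, qp, qp, ← Finset.prod_pow, ← Finset.prod_mul_distrib]
      refine Finset.prod_congr rfl fun k _ => ?_
      rw [one_mul, ww_expand]
    generalize ∑ k ∈ range (n + 1), expand (k + 1) (Nat.succ_ne_zero k) ww = T at *
    obtain ⟨d, hd⟩ := sub_dvd_pow_sub_pow (J 1) (qp 1 (n + 1)) 7
    have key : J 1 ^ 7 - J 7 * (1 - 7 * S) = C 49 * (qp 7 (n + 1) * h) +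
        X ^ (n + 1) * (a * d - b * (1 - 7 * S) + 7 * qp 7 (n + 1) * c) := by
      have e : (C 49 : PowerSeries ℤ) = 49 := map_ofNat _ 49
      rw [e]
      linear_combination hd + d * ha + hq - (1 - 7 * S) * hb + 7 * qp 7 (n + 1) * hc
    rw [key, map_add, coeff_C_mul, coeff_X_pow_mul', if_neg (by omega), add_zero]
    exact dvd_mul_right _ _
  obtain ⟨g, hg⟩ := exists_of_dvd 49 _ this
  have e : (C 49 : PowerSeries ℤ) = 49 := map_ofNat _ 49
  rw [e] at hg
  exact ⟨g, by linear_combination hg⟩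

lemma S_U : U7 S = S := by
  ext n
  rw [coeff_U7, S, coeff_mk, coeff_mk]
  rcases Nat.eq_zero_or_pos n with rfl | hn
  · rfl
  symm
  apply Finset.sum_subset
  · intro d hd
    have := Nat.mem_divisors.1 hd
    exact Nat.mem_divisors.2 ⟨this.1.mul_left 7, by omega⟩
  · intro d hd hnd
    have h1 := Nat.mem_divisors.1 hd
    have : 7 ∣ d := by
      by_contra h7
      apply hnd
      have : Nat.Coprime d 7 := ((Nat.Prime.coprime_iff_not_dvd (by norm_num)).2 h7).symm
      exact Nat.mem_divisors.2 ⟨this.dvd_of_dvd_mul_left h1.1, by omega⟩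
    rw [cw, Nat.mod_eq_zero_of_dvd this]; rfl

/-- theta over Z -/
def tz : Derivation ℤ (PowerSeries ℤ) (PowerSeries ℤ) := (X : PowerSeries ℤ) • PowerSeries.derivative ℤ

lemma coeff_tz (n : ℕ) (f : PowerSeries ℤ) : coeff n (tz f) = n * coeff n f := by
  have : tz f = X * PowerSeries.derivative ℤ f := rfl
  rw [this]
  cases n with
  | zero => simp
  | succ n => rw [coeff_succ_X_mul, coeff_derivative]; push_cast; ring
lemma r_tz (f : PowerSeries ℤ) : r (tz f) = th (r f) := by
  ext n; rw [coeff_r, coeff_th, coeff_r, coeff_tz]; push_cast; rfl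

lemma tz_expand (f : PowerSeries ℤ) : tz (expand 7 (by norm_num) f) = 7 * expand 7 (by norm_num) (tz f) := by
  have e : (7 : PowerSeries ℤ) = C 7 := (map_ofNat _ 7).symm
  ext n
  rw [e, coeff_C_mul, coeff_tz, coeff_expand, coeff_expand]
  split_ifs with h
  · obtain ⟨k, rfl⟩ := h
    rw [coeff_tz, Nat.mul_div_cancel_left _ (by norm_num)]; push_cast; ring
  · ring

lemma thS : th (r S) * j1 ^ 7 = th j1 ^ 7 - j1 ^ 6 * th j1 := by
  obtain ⟨h, hh⟩ := S_spec
  have h2 := congrArg tz hh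
  have e7 : tz (7 : PowerSeries ℤ) = 0 := by simpa using tz.map_natCast 7
  have e49 : tz (49 : PowerSeries ℤ) = 0 := by simpa using tz.map_natCast 49
  have eJ : J 7 = expand 7 (by norm_num) (J 1) := by rw [expand_J 1 7 le_rfl]
  have eT : tz (J 7) = 7 * expand 7 (by norm_num) (tz (J 1)) := by rw [eJ, tz_expand]
  simp only [Derivation.leibniz_pow, Derivation.leibniz, map_add, map_sub, e7, e49, eT, Derivation.map_one_eq_zero, smul_eq_mul, nsmul_eq_mul] at h2
  have n7 : (7 : PowerSeries ℤ) ≠ 0 := by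
    have e : (7 : PowerSeries ℤ) = C 7 := (map_ofNat _ 7).symm
    rw [e]
    intro h; have := congrArg (constantCoeff (R := ℤ)) h; rw [constantCoeff_C, map_zero] at this; norm_num at this
  have h3 : J 1 ^ 6 * tz (J 1) = expand 7 (by norm_num) (tz (J 1)) * (1 - 7 * S) - J 7 * tz S + 7 * tz h := by
    apply mul_left_cancel₀ n7
    push_cast at h2
    linear_combination h2
  have h4 := congrArg r h3
  have e0 : r 7 = 0 := by
    have : (r 7 : F) = 7 := map_ofNat _ 7
    rw [this]; exact_mod_cast CharP.cast_eq_zero F 7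
  simp only [map_mul, map_add, map_sub, map_pow, map_one, e0, r_tz, eJ, r_expand, expand_seven] at h4
  change j1 ^ 6 * th j1 = th j1 ^ 7 * _ - j1 ^ 7 * _ + _ at h4
  linear_combination h4

lemma thS2 : th (r (expand 2 two_ne_zero S)) * j2 ^ 7 = th j2 ^ 7 - j2 ^ 6 * th j2 := by
  have h := congrArg (expand 2 two_ne_zero) thS
  have e : th j2 = 2 * expand 2 two_ne_zero (th j1) := by
    rw [← expand_j1, th_expand]; rfl
  simp only [map_mul, map_sub, map_pow, expand_j1] at h
  rw [r_expand, th_expand, e]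
  push_cast
  generalize expand 2 two_ne_zero (th j1) = x at *
  grind

lemma S2_U : U7 (expand 2 two_ne_zero S) = expand 2 two_ne_zero S := by
  ext n
  rw [coeff_U7, coeff_expand, coeff_expand]
  by_cases h : 2 ∣ n
  · rw [if_pos (h.mul_left 7), if_pos h]
    obtain ⟨k, rfl⟩ := h
    rw [show 7 * (2 * k) / 2 = 7 * k by omega, show 2 * k / 2 = k by omega, ← coeff_U7, S_U]
  · rw [if_neg h, if_neg (by omega)]

lemma rigid (f : F) (h1 : th f = 0) (h2 : U7 f = f) (h3 : constantCoeff f = 0) : f = 0 := by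
  ext n
  induction n using Nat.strong_induction_on with
  | _ n ih =>
    by_cases h : 7 ∣ n
    · obtain ⟨k, rfl⟩ := h
      rcases Nat.eq_zero_or_pos k with rfl | hk
      · simpa using h3
      · rw [← coeff_U7, h2]; exact ih k (by omega)
    · have := congrArg (coeff n) h1
      rw [coeff_th] at this
      rcases mul_eq_zero.1 (this.trans (map_zero _)) with h' | h'
      · exact absurd ((ZMod.natCast_eq_zero_iff n 7).1 h') h
      · rw [h', map_zero]

/-- generator -/
def A : F := paramA.choose
/-- inverse of generator -/
def v : F := paramA.choose_spec.choose
lemma Av : A * v = 1 := paramA.choose_spec.choose_spec.1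
lemma thA : th A = v - A ^ 5 := paramA.choose_spec.choose_spec.2.1
lemma A_const : constantCoeff A = 1 := paramA.choose_spec.choose_spec.2.2.1
lemma D1A : D1 * A ^ 3 = (A ^ 3 - 1) * (A ^ 3 + 1) ^ 2 := paramA.choose_spec.choose_spec.2.2.2.1
lemma D2A : D2 * A ^ 3 = (A ^ 3 - 1) ^ 2 * (A ^ 3 + 1) := paramA.choose_spec.choose_spec.2.2.2.2.1
lemma thj1 : th j1 = 5 * ((2 * v - A ^ 2) ^ 2 - 1) * j1 := paramA.choose_spec.choose_spec.2.2.2.2.2.1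
lemma thj2 : th j2 = 3 * ((3 * v - 2 * A ^ 2) ^ 2 - 1) * j2 := paramA.choose_spec.choose_spec.2.2.2.2.2.2

/-- S mod 7 -/
def s1 : F := r S
/-- S2 mod 7 -/
def s2 : F := r (expand 2 two_ne_zero S)

lemma ths1 : th s1 = 5 * ((2 * v - A ^ 2) ^ 14 - (2 * v - A ^ 2) ^ 2) := by
  apply (j1_unit.pow 7).mul_right_cancel
  rw [s1, thS, thj1]
  generalize 2 * v - A ^ 2 = y
  generalize j1 = j
  grind
lemma ths2 : th s2 = 3 * ((3 * v - 2 * A ^ 2) ^ 14 - (3 * v - 2 * A ^ 2) ^ 2) := by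
  apply (j2_unit.pow 7).mul_right_cancel
  rw [s2, thS2, thj2]
  generalize 3 * v - 2 * A ^ 2 = y
  generalize j2 = j
  grind

lemma frob_sub (x y : F) : (x - y) ^ 7 = x ^ 7 - y ^ 7 := sub_pow_char x y (p := 7)

lemma e_eq : s1 - s2 = 4 * (A ^ 3 - 1) := by
  rw [← sub_eq_zero]
  apply rigid
  · have hp : (2 * v - A ^ 2) ^ 2 - 2 * (3 * v - 2 * A ^ 2) ^ 2 = - A := by
      have := Av
      generalize A = A at *
      generalize v = v at *
      grind
    have h7 : (2 * v - A ^ 2) ^ 14 - 2 * (3 * v - 2 * A ^ 2) ^ 14 = - A ^ 7 := by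
      have h := congrArg (· ^ 7) hp
      simp only [frob_sub] at h
      generalize (2 * v - A ^ 2) = y at *
      generalize (3 * v - 2 * A ^ 2) = z at *
      grind
    have : th (s1 - s2 - 4 * (A ^ 3 - 1)) = th s1 - th s2 - 4 * (3 * A ^ 2 * th A) := by
      rw [map_sub, map_sub, th_mul, map_sub, th_pow, th4, th_one]; push_cast; ring
    rw [this, ths1, ths2, thA]
    have := Av
    generalize (2 * v - A ^ 2) = y at *
    generalize (3 * v - 2 * A ^ 2) = z at *
    generalize y ^ 14 = y1 at *
    generalize z ^ 14 = z1 at *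
    generalize y ^ 2 = y2 at *
    generalize z ^ 2 = z2 at *
    generalize A = A at *
    generalize v = v at *
    grind
  · have h4 : (4 : F) ^ 7 = 4 := by grind
    have : U7 (4 * (A ^ 3 - 1)) = 4 * (A ^ 3 - 1) := by
      rw [U7_poly A v Av thA (4 * (A ^ 3 - 1)) (-4) 0 0 4 0 0 0]
      · ring
      · generalize A = A
        grind
    rw [map_sub, map_sub, this, s1, s2, U7_r, U7_r, S_U, S2_U]
  · have e4 : (4 : F) = C 4 := (map_ofNat _ 4).symm
    have z1 : constantCoeff s1 = 0 := by
      have := coeff_r 0 S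
      rw [S, coeff_mk] at this
      simpa [s1, S] using this
    have z2 : constantCoeff s2 = 0 := by
      have := coeff_r 0 (expand 2 two_ne_zero S)
      rw [coeff_expand, S, if_pos (dvd_zero _), coeff_mk] at this
      simpa [s2, S] using this
    rw [e4]
    simp [z1, z2, A_const]
end Tower

namespace Tower
open PowerSeries Finset

lemma U7_A (f x0 x1 x2 x3 x4 x5 x6 : F)
    (h : f = x0 ^ 7 + x1 ^ 7 * A + x2 ^ 7 * A ^ 2 + x3 ^ 7 * A ^ 3 + x4 ^ 7 * A ^ 4 + x5 ^ 7 * A ^ 5 + x6 ^ 7 * A ^ 6) :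
    U7 f = x0 + x1 * A + x2 * A ^ 2 + x3 * A ^ 3 + x4 * A ^ 4 + x5 * v + x6 :=
  U7_poly A v Av thA f x0 x1 x2 x3 x4 x5 x6 h

lemma vA (n : ℕ) : v ^ n * A ^ n = 1 := by rw [← mul_pow, mul_comm, Av, one_pow]

/-- the value of A5 mod 7 -/
def yy : F := (A ^ 3 - 1) ^ 12 * (A ^ 3 + 1) ^ 54 * v ^ 66
/-- the value of (p0+p1)t^3 mod 7 -/
def QQ : F := 4 * (A ^ 3 + 1) ^ 8 * (A ^ 3 - 1) ^ 2 * v ^ 9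

lemma D1v : D1 = (A ^ 3 - 1) * (A ^ 3 + 1) ^ 2 * v ^ 3 := by
  linear_combination v ^ 3 * D1A - D1 * vA 3
lemma D2v : D2 = (A ^ 3 - 1) ^ 2 * (A ^ 3 + 1) * v ^ 3 := by
  linear_combination v ^ 3 * D2A - D2 * vA 3

lemma C2 : U7 (yy * D1) = 6 * QQ := by
  have e : yy * D1 = ((A ^ 3 - 1) * (A ^ 3 + 1) ^ 8 * v ^ 12) ^ 7 * ((A ^ 3 - 1) ^ 6 * A ^ 15) := by
    rw [D1v, yy]
    linear_combination (-(A ^ 3 - 1) ^ 13 * (A ^ 3 + 1) ^ 56 * v ^ 69) * vA 15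
  rw [e, U7_pow, U7_A _ (A ^ 3) (A ^ 2) (A ^ 4) (A ^ 3) (A ^ 2) (A ^ 4) (A ^ 3)]
  · have := Av
    have e : A ^ 3 + A ^ 2 * A + A ^ 4 * A ^ 2 + A ^ 3 * A ^ 3 + A ^ 2 * A ^ 4 + A ^ 4 * v + A ^ 3 = 3 * A ^ 3 * (A ^ 3 - 1) := by
      generalize A = A at *
      generalize v = v at *
      grind
    rw [e, QQ]
    have := vA 3
    have e2 : v ^ 12 * A ^ 3 = v ^ 9 := by linear_combination v ^ 9 * this
    have c : (24 : F) = 3 := by grind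
    linear_combination 3 * (A ^ 3 - 1) ^ 2 * (A ^ 3 + 1) ^ 8 * e2 - (A ^ 3 - 1) ^ 2 * (A ^ 3 + 1) ^ 8 * v ^ 9 * c
  · generalize A = A
    grind

lemma C3 : U7 QQ = 3 * D1 := by
  have e : QQ = ((A ^ 3 + 1) * v ^ 3) ^ 7 * (4 * A ^ 12 * (A ^ 3 + 1) * (A ^ 3 - 1) ^ 2) := by
    rw [QQ]
    linear_combination (-4 * (A ^ 3 + 1) ^ 8 * (A ^ 3 - 1) ^ 2 * v ^ 9) * vA 12
  rw [e, U7_pow, U7_A _ (4 * A ^ 3) (3 * A ^ 2) 0 0 (3 * A ^ 2) (4 * A) 0]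
  · have := Av
    have e : 4 * A ^ 3 + 3 * A ^ 2 * A + 0 * A ^ 2 + 0 * A ^ 3 + 3 * A ^ 2 * A ^ 4 + 4 * A * v + 0 = 3 * (A ^ 6 - 1) := by
      generalize A = A at *
      generalize v = v at *
      grind
    rw [e, D1v]
    ring
  · generalize A = A
    grind

/-- s mod 7 -/
def ss : F := 3 * s1 - s2

/-- W -/
def W : F := 5 * v ^ 2 + 4 * A + 3 * A ^ 4

lemma thss : th ss = W ^ 7 - W := by
  have hp : (2 * v - A ^ 2) ^ 2 + 4 * (3 * v - 2 * A ^ 2) ^ 2 = W := by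
    have := Av
    rw [W]
    generalize A = A at *
    generalize v = v at *
    grind
  have : th ss = 3 * th s1 - th s2 := by
    rw [ss, map_sub, th_mul, th3]; ring
  rw [this, ths1, ths2, ← hp]
  generalize (2 * v - A ^ 2) = y at *
  generalize (3 * v - 2 * A ^ 2) = z at *
  have h := add_pow_char (y ^ 2) (4 * z ^ 2) (p := 7)
  rw [h]
  grind

/-- Y -/
def Y : F := v + 5 * A ^ 5 + 2 * A ^ 11 + 6 * A ^ 17 + 3 * A ^ 23

lemma thv : th v = A ^ 3 - v ^ 3 := by
  have h := congrArg th Av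
  rw [th_mul, thA, th_one] at h
  have := Av
  linear_combination v * h - th v * this + A ^ 3 * vA 2

lemma thY : th Y = (A ^ 6 - 1) ^ 5 * v ^ 3 := by
  have h6 : th (6 : F) = 0 := th_ofNat 6
  rw [Y]
  simp only [map_add, th_mul, th_pow, thA, thv, th5, th2, th3, h6]
  push_cast
  have := Av
  generalize A = A at *
  generalize v = v at *
  grind

lemma UY : U7 Y = 4 * A ^ 5 + 6 * v := by
  have e : Y = v ^ 7 * (A ^ 6 + 5 * A ^ 12 + 2 * A ^ 18 + 6 * A ^ 24 + 3 * A ^ 30) := by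
    rw [Y]
    linear_combination (-(5 * A ^ 5 + 2 * A ^ 11 + 6 * A ^ 17 + 3 * A ^ 23)) * vA 7 - v * vA 6
  rw [e, U7_pow, U7_A _ 0 0 (3 * A ^ 4) (6 * A ^ 3) (2 * A ^ 2) (5 * A) 1]
  · have := Av
    generalize A = A at *
    generalize v = v at *
    grind
  · generalize A = A
    grind

lemma UYW : U7 (Y * W) = A ^ 6 + 3 * A ^ 3 + 4 := by
  have e : Y * W = v ^ 7 * (5 * A ^ 4 + 4 * A ^ 7 + 6 * A ^ 13 + 4 * A ^ 16 + 1 * A ^ 19 + 1 * A ^ 22 + 3 * A ^ 25 + 5 * A ^ 28 + 5 * A ^ 31 + 2 * A ^ 34) := by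
    rw [Y, W]
    have := Av
    generalize A = A at *
    generalize v = v at *
    grind
  rw [e, U7_pow, U7_A _ (4 * A ^ 1 + 5 * A ^ 4) (1 * A ^ 3) (4 * A ^ 2) (5 * A ^ 4) (5 * A ^ 0 + 3 * A ^ 3) (1 * A ^ 2) (6 * A ^ 1 + 2 * A ^ 4)]
  · have := Av
    generalize A = A at *
    generalize v = v at *
    grind
  · rw [add_pow_char _ _ (p := 7), add_pow_char _ _ (p := 7), add_pow_char _ _ (p := 7)]
    generalize A = A
    grind

lemma Uys : U7 (yy * ss) = (A ^ 3 - 1) * (A ^ 3 + 1) ^ 7 * v ^ 9 * (A ^ 6 + 3 * A ^ 3 + 4 - W * (4 * A ^ 5 + 6 * v)) := by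
  have e : yy * ss = ((A ^ 3 - 1) * (A ^ 3 + 1) ^ 7 * v ^ 9) ^ 7 * (th (Y * ss) - W ^ 7 * Y + Y * W) := by
    rw [th_mul, thY, thss, yy]; ring
  rw [e, U7_pow, map_add, map_sub, U7_th, U7_pow, UY, UYW]; ring

/-- M polynomial -/
def MM : F := v ^ 14 * (3 * A ^ 2 + 5 * A ^ 5 + 6 * A ^ 8 + 6 * A ^ 11 + 5 * A ^ 14 + 3 * A ^ 17 + 3 * A ^ 23 + 5 * A ^ 26 + 6 * A ^ 29 + 6 * A ^ 32 + 5 * A ^ 35 + 3 * A ^ 38)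

lemma M_eq : (A ^ 3 - 1) ^ 2 * (A ^ 3 + 1) ^ 10 * v ^ 12 + U7 (yy * ss) = MM := by
  rw [Uys]
  have h1 : W * (4 * A ^ 5 + 6 * v) * A ^ 3 = (5 + 4 * A ^ 3 + 3 * A ^ 6) * (4 * A ^ 6 + 6) := by
    rw [W]
    have := Av
    generalize A = A at *
    generalize v = v at *
    grind
  have h2 : (A ^ 3 - 1) ^ 2 * (A ^ 3 + 1) ^ 10 * A ^ 2 + (A ^ 3 - 1) * (A ^ 3 + 1) ^ 7 * A ^ 2 * ((A ^ 6 + 3 * A ^ 3 + 4) * A ^ 3 - (5 + 4 * A ^ 3 + 3 * A ^ 6) * (4 * A ^ 6 + 6)) = 3 * A ^ 2 + 5 * A ^ 5 + 6 * A ^ 8 + 6 * A ^ 11 + 5 * A ^ 14 + 3 * A ^ 17 + 3 * A ^ 23 + 5 * A ^ 26 + 6 * A ^ 29 + 6 * A ^ 32 + 5 * A ^ 35 + 3 * A ^ 38 := by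
    generalize A = A
    grind
  rw [MM, ← h2, ← h1]
  have a2 : v ^ 14 * A ^ 2 = v ^ 12 := by linear_combination v ^ 12 * vA 2
  have a5 : v ^ 14 * A ^ 5 = v ^ 9 := by linear_combination v ^ 9 * vA 5
  generalize W * (4 * A ^ 5 + 6 * v) = w
  linear_combination (-(A ^ 3 - 1) ^ 2 * (A ^ 3 + 1) ^ 10) * a2 - (A ^ 3 - 1) * (A ^ 3 + 1) ^ 7 * (A ^ 6 + 3 * A ^ 3 + 4 - w) * a5

lemma UMM : U7 MM = 2 * D1 := by
  rw [MM, show v ^ 14 = (v ^ 2) ^ 7 by ring, U7_pow, U7_A _ (5 * A ^ 2 + 5 * A ^ 5) (6 * A ^ 1 + 6 * A ^ 4) (3 * A ^ 0 + 3 * A ^ 3) (3 * A ^ 2 + 3 * A ^ 5) (6 * A ^ 1 + 6 * A ^ 4) (5 * A ^ 0 + 5 * A ^ 3) (0)]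
  · rw [D1v]
    have := Av
    generalize A = A at *
    generalize v = v at *
    grind
  · simp only [add_pow_char _ _ (p := 7)]
    generalize A = A
    grind
end Tower

namespace Tower
open PowerSeries Finset
open scoped PowerSeries.WithPiTopology

lemma r_J7 (b : ℕ) (hb : 1 ≤ b) : r (J (7 * b)) = r (J b) ^ 7 := by
  rw [← expand_J b 7 hb (by norm_num), r_expand, expand_seven]
lemma rJ7 : r (J 7) = j1 ^ 7 := r_J7 1 le_rfl
lemma rJ14 : r (J 14) = j2 ^ 7 := r_J7 2 (by norm_num)
lemma rJ49 : r (J 49) = j1 ^ 49 := by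
  have := r_J7 7 (by norm_num)
  rw [rJ7, ← pow_mul] at this; exact this
lemma rJ98 : r (J 98) = j2 ^ 49 := by
  have := r_J7 14 (by norm_num)
  rw [rJ14, ← pow_mul] at this; exact this

lemma r7 : r 7 = 0 := by
  have : (r 7 : F) = 7 := map_ofNat _ 7
  rw [this]; exact_mod_cast CharP.cast_eq_zero F 7

lemma pent_shift (l : ℤ) : pentagonal (7 * l - 1) = 49 * pentagonal l + 2 := by
  have h1 := two_mul_natCast_pentagonal (7 * l - 1)
  have h2 := two_mul_natCast_pentagonal l
  have : (2 * pentagonal (7 * l - 1) : ℤ) = 2 * (49 * pentagonal l + 2) := by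
    linear_combination h1 - 49 * h2
  omega

lemma g_U (g : PowerSeries ℤ) (hg : HasSum (fun n : ℤ => M (1 - 6 * n) (pentagonal n)) g) :
    U7 (X ^ 12 * g) = 7 * (X ^ 2 * expand 7 (by norm_num) g) := by
  have hx := M_expand _ _ _ 7 (by norm_num) hg
  have h1 := hg.mul_left (M 1 12)
  have h2 := hx.mul_left (M 7 2)
  simp only [M_mul] at h1 h2
  have e1 : M 1 12 * g = X ^ 12 * g := by simp [M]
  have e2 : M 7 2 * expand 7 (by norm_num) g = 7 * (X ^ 2 * expand 7 (by norm_num) g) := by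
    have : (C 7 : PowerSeries ℤ) = 7 := map_ofNat _ 7
    rw [M, this, mul_assoc]
  rw [e1, PowerSeries.WithPiTopology.hasSum_iff_hasSum_coeff] at h1
  rw [e2, PowerSeries.WithPiTopology.hasSum_iff_hasSum_coeff] at h2
  ext n
  rw [coeff_U7]
  refine HasSum.unique ?_ (h2 n)
  have inj : Function.Injective (fun l : ℤ => 7 * l - 1) := by intro a b h; simp only at h; omega
  have h3 := (inj.hasSum_iff (f := fun i => coeff (7 * n) (M (1 * (1 - 6 * i)) (12 + pentagonal i))) ?_).2 (h1 (7 * n))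
  · refine (congrArg (fun k => HasSum k (coeff (7 * n) (X ^ 12 * g))) (?_ : _ = _)).mp h3
    funext l
    simp only [Function.comp, coeff_M, pent_shift]
    have : (n = 2 + 7 * pentagonal l) ↔ (7 * n = 12 + (49 * pentagonal l + 2)) := by omega
    simp only [this]
    split_ifs <;> ring
  · intro m hm
    rw [coeff_M, if_neg]
    intro h
    apply hm
    have h2 := two_mul_natCast_pentagonal m
    have h3 : (12 + pentagonal m : ℤ) = 7 * n := by exact_mod_cast h.symm
    have h7 : (7 : ℤ) ∣ 6 * m - 1 := by
      apply (Int.prime_iff_natAbs_prime.2 (by norm_num) : Prime (7 : ℤ)).dvd_of_dvd_pow (n := 2)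
      refine ⟨24 * n - 41, ?_⟩
      linear_combination -12 * h2 + 24 * h3
    refine ⟨(m + 1) / 7, ?_⟩
    simp only
    omega

lemma ra5 (a5 : PowerSeries ℤ) (h : a5 * (J 1 ^ 16 * J 98 ^ 5) = X ^ 12 * J 2 ^ 5 * J 49 ^ 16) : r a5 = yy := by
  have h1 := congrArg r h
  simp only [map_mul, map_pow, rJ98, rJ49, r_X] at h1
  change r a5 * (j1 ^ 16 * (j2 ^ 49) ^ 5) = X ^ 12 * j2 ^ 5 * (j1 ^ 49) ^ 16 at h1
  have h2 : r a5 * j2 ^ 240 = X ^ 12 * j1 ^ 768 := by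
    apply ((j1_unit.pow 16).mul (j2_unit.pow 5)).mul_left_cancel
    linear_combination h1
  have h3 : r a5 * D2 ^ 10 = D1 ^ 32 := by
    rw [D1, D2]; linear_combination X ^ 20 * h2
  have hD2 : D2 ^ 10 ≠ 0 := by
    apply pow_ne_zero; rw [D2]
    exact mul_ne_zero (pow_ne_zero _ X_ne_zero) (j2_unit.pow 24).ne_zero
  apply mul_right_cancel₀ hD2
  rw [h3, D1v, D2v, yy]
  ring

lemma L1 (a5 : PowerSeries ℤ) (h : a5 * (J 1 ^ 16 * J 98 ^ 5) = X ^ 12 * J 2 ^ 5 * J 49 ^ 16) :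
    ∃ m, U7 a5 = 7 * m ∧ r m = MM := by
  obtain ⟨g, hg, hgs⟩ := quintuple
  obtain ⟨h1, hh1⟩ := S_spec
  have hh2 := congrArg (expand 2 two_ne_zero) hh1
  have e7 : expand 2 two_ne_zero (7 : PowerSeries ℤ) = 7 := map_ofNat _ 7
  have e49 : expand 2 two_ne_zero (49 : PowerSeries ℤ) = 49 := map_ofNat _ 49
  simp only [map_mul, map_add, map_sub, map_pow, map_one, e7, e49, expand_J 1 2 le_rfl, expand_J 7 2 (by norm_num)] at hh2
  norm_num only at hh2
  have hy := ra5 a5 h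
  have hS1 : r S = s1 := rfl
  have hS2 : r (expand 2 two_ne_zero S) = s2 := rfl
  generalize expand 2 two_ne_zero S = S2 at *
  generalize expand 2 two_ne_zero h1 = h2 at *
  -- B
  obtain ⟨i1, hi1⟩ := (J_unit 1 le_rfl).exists_right_inv
  obtain ⟨i14, hi14⟩ := (J_unit 14 (by norm_num)).exists_right_inv
  obtain ⟨B, hB⟩ : ∃ B, B = J 2 * J 7 ^ 16 * i1 ^ 3 * i14 ^ 5 := ⟨_, rfl⟩
  have hB1 : B * (J 1 ^ 3 * J 14 ^ 5) = J 2 * J 7 ^ 16 := by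
    rw [hB]
    calc _ = J 2 * J 7 ^ 16 * (J 1 * i1) ^ 3 * (J 14 * i14) ^ 5 := by ring
      _ = _ := by rw [hi1, hi14]; ring
  have hB7 : expand 7 (by norm_num) B * (J 7 ^ 3 * J 98 ^ 5) = J 14 * J 49 ^ 16 := by
    have := congrArg (expand 7 (by norm_num)) hB1
    simp only [map_mul, map_pow, expand_J 1 7 le_rfl, expand_J 14 7 (by norm_num), expand_J 2 7 (by norm_num), expand_J 7 7 (by norm_num)] at this
    norm_num only at this
    exact this
  -- expansion of a5 modulo 49
  have hmod : ∃ k, a5 = expand 7 (by norm_num) B * (X ^ 12 * g) + 7 * (expand 7 (by norm_num) B * (X ^ 12 * g * (3 * S - S2))) + 49 * k := by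
    generalize expand 7 (by norm_num) B = E at *
    obtain ⟨w, hw⟩ := ((J_unit 7 (by norm_num)).pow 3 |>.mul ((J_unit 98 (by norm_num)).pow 5)).exists_right_inv
    have q1 : a5 * J 1 ^ 21 * J 98 ^ 5 = X ^ 12 * g * J 2 ^ 7 * J 49 ^ 16 := by
      linear_combination J 1 ^ 5 * h - X ^ 12 * J 2 ^ 5 * J 49 ^ 16 * hg
    have q2 : ∃ k1, J 1 ^ 21 = J 7 ^ 3 * (1 - 21 * S) + 49 * k1 := by
      rw [show J 1 ^ 21 = (J 1 ^ 7) ^ 3 by ring, hh1]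
      exact ⟨_, by
        have : (J 7 * (1 - 7 * S) + 49 * h1) ^ 3 = J 7 ^ 3 * (1 - 21 * S) + 49 * (J 7 ^ 3 * (3 * S ^ 2 - 7 * S ^ 3) + h1 * (3 * (J 7 * (1 - 7 * S)) ^ 2 + 3 * (J 7 * (1 - 7 * S)) * (49 * h1) + (49 * h1) ^ 2)) := by ring
        exact this⟩
    obtain ⟨k1, q2⟩ := q2
    rw [q2, hh2] at q1
    obtain ⟨k, hk⟩ : ∃ k, a5 * (J 7 ^ 3 * J 98 ^ 5) = X ^ 12 * g * (J 14 * J 49 ^ 16) * (1 + 7 * (3 * S - S2)) + 49 * k := by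
      refine ⟨a5 * (J 7 ^ 3 * J 98 ^ 5) * 9 * S ^ 2 + X ^ 12 * g * J 14 * J 49 ^ 16 * (- 3 * S2 * S) + X ^ 12 * g * h2 * J 49 ^ 16 * (1 + 21 * S) - a5 * k1 * J 98 ^ 5 * (1 + 21 * S), ?_⟩
      linear_combination (1 + 21 * S) * q1
    refine ⟨k * w, ?_⟩
    rw [← hB7] at hk
    linear_combination w * hk - (a5 - E * (X ^ 12 * g) * (1 + 7 * (3 * S - S2))) * hw
  obtain ⟨k, hk⟩ := hmod
  have lin (f : PowerSeries ℤ) (n : ℤ) : U7 (C n * f) = C n * U7 f := by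
    ext i; rw [coeff_U7, coeff_C_mul, coeff_C_mul, coeff_U7]
  have c7 : (C 7 : PowerSeries ℤ) = 7 := map_ofNat _ 7
  have c49 : (C 49 : PowerSeries ℤ) = 49 := map_ofNat _ 49
  have l7 (f : PowerSeries ℤ) : U7 (7 * f) = 7 * U7 f := by rw [← c7, lin]
  have l49 (f : PowerSeries ℤ) : U7 (49 * f) = 49 * U7 f := by rw [← c49, lin]
  refine ⟨B * (X ^ 2 * expand 7 (by norm_num) g) + B * U7 (X ^ 12 * g * (3 * S - S2)) + 7 * U7 k, ?_, ?_⟩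
  · rw [hk, map_add, map_add, l7, l49, U7_expand, U7_expand, g_U g hgs]; ring
  · have e3 : (r 3 : F) = 3 := map_ofNat _ 3
    have hrB := congrArg r hB1
    simp only [map_mul, map_pow, rJ7, rJ14] at hrB
    change r B * (j1 ^ 3 * (j2 ^ 7) ^ 5) = j2 * (j1 ^ 7) ^ 16 at hrB
    have hrg := congrArg r hg
    simp only [map_mul, map_pow] at hrg
    change r g * j2 ^ 2 = j1 ^ 5 at hrg
    have hrB : r B * j2 ^ 34 = j1 ^ 109 := by
      apply ((j1_unit.pow 3).mul j2_unit).mul_left_cancel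
      linear_combination hrB
    rw [← M_eq]
    simp only [map_mul, map_add, map_pow, r7, ← U7_r, map_sub, e3, r_X, r_expand, expand_seven, hS1, hS2]
    rw [← ss, ← U7_pow]
    have hD2 : D2 ^ 2 ≠ 0 := by
      apply pow_ne_zero; rw [D2]
      exact mul_ne_zero (pow_ne_zero _ X_ne_zero) (j2_unit.pow 24).ne_zero
    have t1 : r B * (X ^ 2 * r g ^ 7) = (A ^ 3 - 1) ^ 2 * (A ^ 3 + 1) ^ 10 * v ^ 12 := by
      apply mul_right_cancel₀ hD2
      have : r B * (X ^ 2 * r g ^ 7) * D2 ^ 2 = D1 ^ 6 := by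
        rw [D2, D1]
        calc _ = X ^ 6 * (r B * j2 ^ 34) * (r g * j2 ^ 2) ^ 7 := by ring
          _ = _ := by rw [hrB, hrg]; ring
      rw [this, D1v, D2v]; ring
    have t2 : r B ^ 7 * (X ^ 12 * r g * ss) = yy * ss := by
      have hu := (j2_unit.pow 240)
      apply hu.mul_left_cancel
      have h1 := congrArg r h
      simp only [map_mul, map_pow, rJ98, rJ49, r_X] at h1
      change r a5 * (j1 ^ 16 * (j2 ^ 49) ^ 5) = X ^ 12 * j2 ^ 5 * (j1 ^ 49) ^ 16 at h1
      have h2 : r a5 * j2 ^ 240 = X ^ 12 * j1 ^ 768 := by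
        apply ((j1_unit.pow 16).mul (j2_unit.pow 5)).mul_left_cancel
        linear_combination h1
      rw [← hy]
      calc _ = X ^ 12 * (r B * j2 ^ 34) ^ 7 * (r g * j2 ^ 2) * ss := by ring
        _ = (X ^ 12 * j1 ^ 768) * ss := by rw [hrB, hrg]; ring
        _ = _ := by rw [← h2]; ring
    rw [t1, t2]; ring

end Tower

namespace Tower
open PowerSeries Finset

lemma ofPS_coeff (f : PowerSeries ℤ) (n : ℤ) :
    (HahnSeries.ofPowerSeries ℤ ℤ f).coeff n = if 0 ≤ n then coeff n.toNat f else 0 := by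
  split_ifs with h
  · obtain ⟨k, rfl⟩ := Int.eq_ofNat_of_zero_le h
    have := HahnSeries.ofPowerSeries_apply_coeff (Γ := ℤ) f k
    simpa using this
  · have := LaurentSeries.coeff_coe_powerSeries (R := ℤ) f
    rw [HahnSeries.ofPowerSeries_apply, HahnSeries.embDomain_of_notMem_range]
    rintro ⟨k, hk⟩
    apply h
    rw [← hk]
    simp

lemma U_ofPS (U : LaurentSeries ℤ → LaurentSeries ℤ)
    (hU : ∀ (f : LaurentSeries ℤ) (n : ℤ), (U f).coeff n = f.coeff (7 * n)) (f : PowerSeries ℤ) :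
    U (HahnSeries.ofPowerSeries ℤ ℤ f) = HahnSeries.ofPowerSeries ℤ ℤ (U7 f) := by
  ext n
  rw [hU, ofPS_coeff, ofPS_coeff]
  by_cases h : 0 ≤ n
  · rw [if_pos (by omega), if_pos h, coeff_U7]
    congr 2; omega
  · rw [if_neg (by omega), if_neg h]

lemma final (m x : PowerSeries ℤ) (h : r m = r x) (n : ℤ) :
    Int.ModEq 49 ((HahnSeries.ofPowerSeries ℤ ℤ (7 * m)).coeff n) ((HahnSeries.ofPowerSeries ℤ ℤ (7 * x)).coeff n) := by
  rw [ofPS_coeff, ofPS_coeff]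
  split_ifs with hn
  · have e : (7 : PowerSeries ℤ) = C 7 := (map_ofNat _ 7).symm
    rw [e, coeff_C_mul, coeff_C_mul]
    have h1 := congrArg (coeff n.toNat) h
    rw [coeff_r, coeff_r] at h1
    have h2 := (ZMod.intCast_eq_intCast_iff _ _ 7).1 h1
    exact Int.ModEq.mul_left' (c := 7) h2
  · rfl

lemma l7 (f : PowerSeries ℤ) : U7 (7 * f) = 7 * U7 f := by
  have c7 : (7 : PowerSeries ℤ) = C 7 := (map_ofNat _ 7).symm
  ext i; rw [c7, coeff_U7, coeff_C_mul, coeff_C_mul, coeff_U7]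

lemma U7_nat (k : ℕ) (f : F) : U7 ((k : F) * f) = (k : F) * U7 f := by
  have : (k : F) = C (k : ZMod 7) := by simp
  ext i; rw [this, coeff_U7, coeff_C_mul, coeff_C_mul, coeff_U7]

lemma rt (t : PowerSeries ℤ) (ht : t * (J 1) ^ 4 = X * (J 7) ^ 4) : r t = D1 := by
  have h := congrArg r ht
  simp only [map_mul, map_pow, rJ7, r_X] at h
  change r t * j1 ^ 4 = _ at h
  apply (j1_unit.pow 4).mul_right_cancel
  rw [h, D1]; ring

lemma rp0 (p0 : PowerSeries ℤ) (hp0 : (1 + 7 * p0) * ((J 1) ^ 7 * J 14) = 8 * (J 2) ^ 7 * J 7) :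
    r p0 = 4 * (A ^ 3 + 1) := by
  obtain ⟨h1, hh1⟩ := S_spec
  have hh2 := congrArg (expand 2 two_ne_zero) hh1
  have e7 : expand 2 two_ne_zero (7 : PowerSeries ℤ) = 7 := map_ofNat _ 7
  have e49 : expand 2 two_ne_zero (49 : PowerSeries ℤ) = 49 := map_ofNat _ 49
  simp only [map_mul, map_add, map_sub, map_pow, map_one, e7, e49, expand_J 1 2 le_rfl, expand_J 7 2 (by norm_num)] at hh2
  norm_num only at hh2
  have hS1 : r S = s1 := rfl
  have hS2 : r (expand 2 two_ne_zero S) = s2 := rfl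
  generalize expand 2 two_ne_zero S = S2 at *
  generalize expand 2 two_ne_zero h1 = h2 at *
  rw [hh1, hh2] at hp0
  have n7 : (7 : PowerSeries ℤ) ≠ 0 := by
    have e : (7 : PowerSeries ℤ) = C 7 := (map_ofNat _ 7).symm
    rw [e]
    intro h; have := congrArg (constantCoeff (R := ℤ)) h; rw [constantCoeff_C, map_zero] at this; norm_num at this
  have h3 : p0 * (J 7 * (1 - 7 * S) + 49 * h1) * J 14 = J 7 * J 14 * (1 + S - 8 * S2) + 7 * (8 * h2 * J 7 - h1 * J 14) := by
    apply mul_left_cancel₀ n7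
    linear_combination hp0
  have h4 := congrArg r h3
  have r49 : r 49 = 0 := by rw [show (49 : PowerSeries ℤ) = 7 * 7 by norm_num, map_mul, r7, zero_mul]
  have r8 : (r 8 : F) = 1 := by rw [show (8 : PowerSeries ℤ) = 7 + 1 by norm_num, map_add, r7, map_one, zero_add]
  simp only [map_mul, map_add, map_sub, map_one, r7, r49, r8, rJ7, rJ14, hS1, hS2] at h4
  apply ((j1_unit.pow 7).mul (j2_unit.pow 7)).mul_left_cancel
  have := e_eq
  have c7 : (7 : F) = 0 := by exact_mod_cast CharP.cast_eq_zero F 7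
  linear_combination h4 + j1 ^ 7 * j2 ^ 7 * (this - c7)

lemma rq3 (t q3 : PowerSeries ℤ) (ht : r t = D1)
    (h : q3 * (X * (J 1) ^ 4 * (J 14) ^ 4) = (J 2) ^ 4 * (J 7) ^ 4 * t ^ 3) :
    r q3 = (A ^ 3 - 1) ^ 2 * (A ^ 3 + 1) ^ 7 * v ^ 9 := by
  have h1 := congrArg r h
  simp only [map_mul, map_pow, rJ7, rJ14, r_X, ht] at h1
  change r q3 * (X * j1 ^ 4 * (j2 ^ 7) ^ 4) = j2 ^ 4 * (j1 ^ 7) ^ 4 * D1 ^ 3 at h1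
  have h2 : r q3 * D2 = D1 * D1 ^ 3 := by
    apply ((j1_unit.pow 4).mul (j2_unit.pow 4)).mul_left_cancel
    have hd1 : D1 = X * j1 ^ 24 := rfl
    have hd2 : D2 = X ^ 2 * j2 ^ 24 := rfl
    rw [hd2]
    linear_combination X * h1 - (j1 ^ 4 * j2 ^ 4 * D1 ^ 3) * hd1
  have hD2 : D2 ≠ 0 := by
    rw [D2]
    exact mul_ne_zero (pow_ne_zero _ X_ne_zero) (j2_unit.pow 24).ne_zero
  apply mul_right_cancel₀ hD2
  rw [h2, D1v, D2v]; ring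

lemma exists_a5 : ∃ a5, a5 * (J 1 ^ 16 * J 98 ^ 5) = X ^ 12 * J 2 ^ 5 * J 49 ^ 16 := by
  obtain ⟨w, hw⟩ := ((J_unit 1 le_rfl).pow 16 |>.mul ((J_unit 98 (by norm_num)).pow 5)).exists_right_inv
  exact ⟨X ^ 12 * J 2 ^ 5 * J 49 ^ 16 * w, by linear_combination X ^ 12 * J 2 ^ 5 * J 49 ^ 16 * hw⟩

lemma exists_q3 (t : PowerSeries ℤ) (ht : t * (J 1) ^ 4 = X * (J 7) ^ 4) :
    ∃ q3, q3 * (X * (J 1) ^ 4 * (J 14) ^ 4) = (J 2) ^ 4 * (J 7) ^ 4 * t ^ 3 := by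
  obtain ⟨w, hw⟩ := ((J_unit 1 le_rfl).pow 4).exists_right_inv
  obtain ⟨z, hz⟩ := ((J_unit 14 (by norm_num)).pow 4).exists_right_inv
  have h1 : t = X * (J 7 ^ 4 * w) := by linear_combination w * ht - t * hw
  refine ⟨(J 2) ^ 4 * (J 7) ^ 4 * t ^ 2 * (J 7 ^ 4 * w) * w * z, ?_⟩
  calc _ = (J 2) ^ 4 * (J 7) ^ 4 * t ^ 2 * (X * (J 7 ^ 4 * w)) * (J 1 ^ 4 * w) * (J 14 ^ 4 * z) := by ring
    _ = _ := by rw [← h1, hw, hz]; ring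

lemma tower (t a5 : PowerSeries ℤ) (ht : r t = D1)
    (h : a5 * (J 1 ^ 16 * J 98 ^ 5) = X ^ 12 * J 2 ^ 5 * J 49 ^ 16)
    (l : ℕ → PowerSeries ℤ) (l0 : l 0 = 1) (lo : ∀ β, l (2 * β + 1) = U7 (a5 * l (2 * β)))
    (le : ∀ β, l (2 * β + 2) = U7 (l (2 * β + 1))) (β : ℕ) :
    ∃ m, l (2 * (β + 1)) = 7 * m ∧ r m = ((2 ^ (2 * β + 1) : ℕ) : F) * D1 := by
  induction β with
  | zero =>
    obtain ⟨m, hm, hr⟩ := L1 a5 h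
    have h1 := lo 0
    have h2 := le 0
    rw [mul_zero, l0, mul_one, hm] at h1
    simp only [mul_zero, zero_add] at h1 h2
    rw [h1, l7] at h2
    refine ⟨U7 m, h2, ?_⟩
    rw [← U7_r, hr, UMM]; push_cast; ring
  | succ β ih =>
    obtain ⟨m, hm, hr⟩ := ih
    have h1 := lo (β + 1)
    have h2 := le (β + 1)
    rw [hm, show a5 * (7 * m) = 7 * (a5 * m) by ring, l7] at h1
    rw [h1, l7] at h2
    refine ⟨U7 (U7 (a5 * m)), h2, ?_⟩
    rw [← U7_r, ← U7_r, map_mul, ra5 a5 h, hr, show yy * (((2 ^ (2 * β + 1) : ℕ) : F) * D1) = ((2 ^ (2 * β + 1) : ℕ) : F) * (yy * D1) by ring,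
      U7_nat, C2, U7_nat]
    have := U7_nat 6 QQ
    push_cast at this
    rw [this, C3]
    have c7 : (7 : F) = 0 := by exact_mod_cast CharP.cast_eq_zero F 7
    push_cast
    linear_combination 2 * 2 ^ (2 * β + 1) * D1 * c7

lemma tower_odd (a5 : PowerSeries ℤ)
    (h : a5 * (J 1 ^ 16 * J 98 ^ 5) = X ^ 12 * J 2 ^ 5 * J 49 ^ 16) (m : PowerSeries ℤ) (β : ℕ)
    (hr : r m = ((2 ^ (2 * β + 1) : ℕ) : F) * D1) :
    r (U7 (a5 * m)) = 2 ^ (2 * β) * 5 * QQ := by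
  rw [← U7_r, map_mul, ra5 a5 h, hr, show yy * (((2 ^ (2 * β + 1) : ℕ) : F) * D1) = ((2 ^ (2 * β + 1) : ℕ) : F) * (yy * D1) by ring,
      U7_nat, C2]
  have c7 : (7 : F) = 0 := by exact_mod_cast CharP.cast_eq_zero F 7
  push_cast
  linear_combination 2 ^ (2 * β) * QQ * c7
end Tower

theorem stmt19
    (t : PowerSeries ℤ) (ht : t * (J 1) ^ 4 = PowerSeries.X * (J 7) ^ 4)
    (p0 : PowerSeries ℤ)
    (hp0 : (1 + 7 * p0) * ((J 1) ^ 7 * J 14) = 8 * (J 2) ^ 7 * J 7)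
    (p1 : LaurentSeries ℤ)
    (hp1 : p1 * HahnSeries.ofPowerSeries ℤ ℤ (PowerSeries.X * (J 1) ^ 4 * (J 14) ^ 4)
        = HahnSeries.ofPowerSeries ℤ ℤ ((J 2) ^ 4 * (J 7) ^ 4))
    (U : LaurentSeries ℤ → LaurentSeries ℤ)
    (hU : ∀ (f : LaurentSeries ℤ) (n : ℤ), (U f).coeff n = f.coeff (7 * n))
    (A5 : LaurentSeries ℤ)
    (hA5 : A5 * HahnSeries.ofPowerSeries ℤ ℤ ((J 1) ^ 16 * (J 98) ^ 5)
        = HahnSeries.ofPowerSeries ℤ ℤ (PowerSeries.X ^ 12 * (J 2) ^ 5 * (J 49) ^ 16))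
    (L : ℕ → LaurentSeries ℤ) (hL0 : L 0 = 1)
    (hLodd : ∀ β : ℕ, L (2 * β + 1) = U (A5 * L (2 * β)))
    (hLeven : ∀ β : ℕ, L (2 * β + 2) = U (L (2 * β + 1)))
    (α : ℕ) (hα : 1 ≤ α) :
    (∀ n : ℤ, Int.ModEq 49 ((L (2 * α)).coeff n)
        ((((2 ^ (2 * α - 1) * 7 : ℤ) : LaurentSeries ℤ) *
            HahnSeries.ofPowerSeries ℤ ℤ t).coeff n))
    ∧ (∀ n : ℤ, Int.ModEq 49 ((L (2 * α + 1)).coeff n)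
        ((((2 ^ (2 * α - 2) * 35 : ℤ) : LaurentSeries ℤ) *
            ((HahnSeries.ofPowerSeries ℤ ℤ p0 + p1) *
              (HahnSeries.ofPowerSeries ℤ ℤ t) ^ 3)).coeff n)) := by
  obtain ⟨a5, ha5⟩ := Tower.exists_a5
  obtain ⟨q3, hq3⟩ := Tower.exists_q3 t ht
  have inj : Function.Injective (HahnSeries.ofPowerSeries ℤ ℤ) := HahnSeries.ofPowerSeries_injective
  have eA : A5 = HahnSeries.ofPowerSeries ℤ ℤ a5 := by
    have hne : HahnSeries.ofPowerSeries ℤ ℤ ((J 1) ^ 16 * (J 98) ^ 5) ≠ 0 := by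
      rw [Ne, map_eq_zero_iff _ inj]
      exact (((Tower.J_unit 1 le_rfl).pow 16).mul ((Tower.J_unit 98 (by norm_num)).pow 5)).ne_zero
    apply mul_right_cancel₀ hne
    rw [hA5, ← map_mul, ha5]
  have eq3 : p1 * (HahnSeries.ofPowerSeries ℤ ℤ t) ^ 3 = HahnSeries.ofPowerSeries ℤ ℤ q3 := by
    have hne : HahnSeries.ofPowerSeries ℤ ℤ (PowerSeries.X * (J 1) ^ 4 * (J 14) ^ 4) ≠ 0 := by
      rw [Ne, map_eq_zero_iff _ inj]
      exact mul_ne_zero (mul_ne_zero PowerSeries.X_ne_zero ((Tower.J_unit 1 le_rfl).pow 4).ne_zero)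
        ((Tower.J_unit 14 (by norm_num)).pow 4).ne_zero
    apply mul_right_cancel₀ hne
    rw [mul_right_comm, hp1, ← map_pow, ← map_mul, ← map_mul, hq3]
  have hl : ∀ k, ∃ l, L (2 * k) = HahnSeries.ofPowerSeries ℤ ℤ l := by
    intro k
    induction k with
    | zero => exact ⟨1, by rw [mul_zero, hL0, map_one]⟩
    | succ k ih =>
      obtain ⟨l, hl⟩ := ih
      refine ⟨Tower.U7 (Tower.U7 (a5 * l)), ?_⟩
      rw [show 2 * (k + 1) = 2 * k + 2 by ring, hLeven, hLodd, hl, eA, ← map_mul, Tower.U_ofPS U hU, Tower.U_ofPS U hU]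
  have hl' : ∀ k, ∃ l, L k = HahnSeries.ofPowerSeries ℤ ℤ l := by
    intro k
    rcases Nat.even_or_odd' k with ⟨b, rfl | rfl⟩
    · exact hl b
    · obtain ⟨l, hl⟩ := hl b
      exact ⟨Tower.U7 (a5 * l), by rw [hLodd, hl, eA, ← map_mul, Tower.U_ofPS U hU]⟩
  choose l hl using hl'
  have l0 : l 0 = 1 := inj (by rw [← hl, hL0, map_one])
  have lo : ∀ β, l (2 * β + 1) = Tower.U7 (a5 * l (2 * β)) := fun β =>
    inj (by rw [← hl, hLodd, hl (2 * β), eA, ← map_mul, Tower.U_ofPS U hU])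
  have le : ∀ β, l (2 * β + 2) = Tower.U7 (l (2 * β + 1)) := fun β =>
    inj (by rw [← hl, hLeven, hl (2 * β + 1), Tower.U_ofPS U hU])
  have hrt := Tower.rt t ht
  obtain ⟨β, rfl⟩ : ∃ β, α = β + 1 := ⟨α - 1, by omega⟩
  obtain ⟨m, hm, hr⟩ := Tower.tower t a5 hrt ha5 l l0 lo le β
  rw [show 2 * (β + 1) - 1 = 2 * β + 1 by omega, show 2 * (β + 1) - 2 = 2 * β by omega]
  have r2 : (Tower.r 2 : Tower.F) = 2 := map_ofNat _ 2
  have r5 : (Tower.r 5 : Tower.F) = 5 := map_ofNat _ 5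
  constructor
  · intro n
    have e : ((2 ^ (2 * β + 1) * 7 : ℤ) : LaurentSeries ℤ) * HahnSeries.ofPowerSeries ℤ ℤ t =
        HahnSeries.ofPowerSeries ℤ ℤ (7 * (2 ^ (2 * β + 1) * t)) := by
      simp only [map_mul, map_pow, map_ofNat]; push_cast; ring
    rw [e, hl, hm]
    apply Tower.final
    rw [hr, map_mul, map_pow, r2, hrt]; push_cast; ring
  · intro n
    have e : ((2 ^ (2 * β) * 35 : ℤ) : LaurentSeries ℤ) * ((HahnSeries.ofPowerSeries ℤ ℤ p0 + p1) *
              (HahnSeries.ofPowerSeries ℤ ℤ t) ^ 3) =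
        HahnSeries.ofPowerSeries ℤ ℤ (7 * (2 ^ (2 * β) * 5 * (p0 * t ^ 3 + q3))) := by
      rw [add_mul, eq3]
      simp only [map_mul, map_pow, map_add, map_ofNat]; push_cast; ring
    rw [e, hl, lo, hm, show a5 * (7 * m) = 7 * (a5 * m) by ring, Tower.l7]
    apply Tower.final
    rw [Tower.tower_odd a5 ha5 m β hr]
    simp only [map_mul, map_pow, map_add, r2, r5, hrt, Tower.rp0 p0 hp0, Tower.rq3 t q3 hrt hq3]
    congr 1
    rw [Tower.D1v, Tower.QQ]
    have c7 : (7 : Tower.F) = 0 := by exact_mod_cast CharP.cast_eq_zero Tower.F 7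
    linear_combination (Tower.A ^ 3 - 1) ^ 2 * (Tower.A ^ 3 + 1) ^ 7 * Tower.v ^ 9 * c7
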